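/- arXiv:1201.0701 — 3 statements merged into one kernel-verified Lean document; each statement's English description precedes it below -/
import Mathlib

section
/- Let p₁ ≡ 7 (mod 8) be a prime, let m ≥ 1, set N = 2p₁^m, and let p ≡ 3 (mod 4) be a prime with f := ord_N(p) = φ(N)/2. Let s be an odd positive integer and set q = p^{fs}. Let γ be any primitive element of F_q, let C_i = γ^i⟨γ^N⟩ (0 ≤ i ≤ N−1) be the cyclotomic classes of order N of F_q, let I ⊆ {0, 1, …, N−1} be any subset such that reduction modulo p₁^m maps I bijectively onto Z_{p₁^m}, and let D = ⋃_{i∈I} C_i. Then D is a skew Hadamard difference set in the additive group of F_q. -/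
open scoped Classical

/-- The cyclotomic class `C_i = γ^i ⟨γ^N⟩ = {γ^{i+Nk} : k ∈ ℤ}` of order `N` of a finite
field, with respect to the primitive element `γ`. -/
def cycClass {F : Type*} [Field F] (γ : Fˣ) (N i : ℕ) : Set F :=
  {x : F | ∃ k : ℤ, x = ((γ ^ ((i : ℤ) + (N : ℤ) * k) : Fˣ) : F)}

/-- `D` is a skew Hadamard difference set in `(G, +)`: it is a difference set
(every nonzero `g` has the same number of representations `g = d₁ - d₂` with
`d₁, d₂ ∈ D`) and `G` is the disjoint union of `D`, `-D` and `{0}`. -/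
def IsSkewHadamardDifferenceSet {G : Type*} [AddCommGroup G] (D : Set G) : Prop :=
  (0 : G) ∉ D ∧ (∀ g : G, g ≠ 0 → (g ∈ D ↔ -g ∉ D)) ∧
    ∃ l : ℕ, ∀ g : G, g ≠ 0 →
      Nat.card {x : G × G // x.1 ∈ D ∧ x.2 ∈ D ∧ x.1 - x.2 = g} = l

/-
Let `e` be the function equal to `1` on `D`, to `-1` on `-D` and to `0` at `0`. A skew set `D` is a
difference set as soon as the square of the Fourier transform of `e` is constant off `0`. For odd
`M` and `D` stable under multiplication by `2M`-th powers, `e` is, up to the quadratic character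
`ρ`, invariant under multiplication by `M`-th powers, hence a combination of the characters `χ * ρ`
with `χ ^ M = 1`. If some power `p ^ j` is congruent to `2` modulo `M`, the Hasse–Davenport relation
between the Gauss sums of `χ`, `χ * ρ` and `χ ^ 2`, together with the invariance of Gauss sums under
Frobenius, shows that all these `χ * ρ` have the same Gauss sum, that of `ρ`. So the Fourier
transform of `e` at `a ≠ 0` is `± gaussSum ρ`.

For `M = p₁ ^ m`, the subgroup generated by `p` is the subgroup of squares of the cyclic group
`(ℤ/M)ˣ`, and it contains `2` because `p₁ ≡ 7 (mod 8)`.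
-/

open Finset

/-! ### Fourier sums and difference sets -/

section SkewIndicator

variable {G : Type*} [AddGroup G]

/-- The function which is `1` on `D` and `-1` on `-D`, when these two sets are disjoint. It is
the `±1`-valued function whose Fourier sums decide whether a skew set is a difference set. -/
noncomputable def skewIndicator (D : Set G) (x : G) : ℂ :=
  D.indicator 1 x - D.indicator 1 (-x)

lemma skewIndicator_neg (D : Set G) (x : G) : skewIndicator D (-x) = -skewIndicator D x := by
  simp [skewIndicator]

lemma indicator_add_indicator_neg {D : Set G} (h0 : 0 ∉ D) (hskew : ∀ g ≠ 0, g ∈ D ↔ -g ∉ D)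
    (x : G) : (D.indicator 1 x + D.indicator 1 (-x) : ℂ) = 1 - if x = 0 then 1 else 0 := by
  rcases eq_or_ne x 0 with rfl | hx
  · simp [h0]
  · by_cases hxD : -x ∈ D <;> simp [hskew x hx, hxD, hx]

lemma skewIndicator_sq {D : Set G} (hskew : ∀ g ≠ 0, g ∈ D ↔ -g ∉ D) {x : G} (hx : x ≠ 0) :
    skewIndicator D x ^ 2 = 1 := by
  by_cases hxD : -x ∈ D <;> simp [skewIndicator, hskew x hx, hxD]

end SkewIndicator

section FourierSum

variable {R : Type*} [CommRing R] [Fintype R] {ψ : AddChar R ℂ}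

/-- The Fourier transform of `f` at the additive character `x ↦ ψ (a * x)`. The ring element `a`
indexes all additive characters of `R` when `ψ` is primitive. -/
noncomputable def fourierSum (ψ : AddChar R ℂ) (f : R → ℂ) (a : R) : ℂ :=
  ∑ x, f x * ψ (a * x)

lemma fourierSum_comp_neg (f : R → ℂ) (a : R) :
    fourierSum ψ (fun x ↦ f (-x)) a = fourierSum ψ f (-a) := by
  unfold fourierSum
  rw [← Equiv.sum_comp (Equiv.neg R)]
  simp

lemma card_mul_sum_sub_eq (hψ : ψ.IsPrimitive) (f : R → ℂ) (g : R) :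
    (Fintype.card R : ℂ) * ∑ z : R × R with z.1 - z.2 = g, f z.1 * f z.2 =
      ∑ a, fourierSum ψ f a * fourierSum ψ f (-a) * ψ (a * -g) := by
  have expand (a : R) : fourierSum ψ f a * fourierSum ψ f (-a) * ψ (a * -g) =
      ∑ z : R × R, f z.1 * f z.2 * ψ (a * (z.1 - z.2 - g)) := by
    rw [fourierSum, fourierSum, sum_mul_sum, ← Fintype.sum_prod_type', sum_mul]
    refine sum_congr rfl fun z _ ↦ ?_
    rw [show a * (z.1 - z.2 - g) = a * z.1 + -a * z.2 + a * -g by ring,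
      AddChar.map_add_eq_mul, AddChar.map_add_eq_mul]
    ring
  simp_rw [expand]
  rw [sum_comm, mul_sum, sum_filter]
  refine sum_congr rfl fun z _ ↦ ?_
  rw [← mul_sum, AddChar.sum_mulShift _ hψ]
  simp only [sub_eq_zero]
  split_ifs <;> simp [mul_comm]

lemma card_sub_eq_eq_sum (D : Set R) (g : R) :
    (Nat.card {z : R × R // z.1 ∈ D ∧ z.2 ∈ D ∧ z.1 - z.2 = g} : ℂ) =
      ∑ z : R × R with z.1 - z.2 = g, D.indicator 1 z.1 * D.indicator 1 z.2 := by
  rw [Nat.card_eq_fintype_card, Fintype.card_subtype, card_filter, sum_filter, Nat.cast_sum]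
  refine sum_congr rfl fun z _ ↦ ?_
  by_cases h₁ : z.1 ∈ D <;> by_cases h₂ : z.2 ∈ D <;> simp [h₁, h₂]

lemma exists_card_sub_eq (hψ : ψ.IsPrimitive) {D : Set R} {c : ℂ}
    (hD : ∀ a ≠ 0, fourierSum ψ (D.indicator 1) a * fourierSum ψ (D.indicator 1) (-a) = c) :
    ∃ l : ℕ, ∀ g ≠ 0, Nat.card {z : R × R // z.1 ∈ D ∧ z.2 ∈ D ∧ z.1 - z.2 = g} = l := by
  set s := fourierSum ψ (D.indicator 1)
  have spectrum (a : R) : s a * s (-a) = c + if a = 0 then s 0 ^ 2 - c else 0 := by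
    split_ifs with ha
    · rw [ha, neg_zero]; ring
    · rw [hD a ha, add_zero]
  have count {g : R} (hg : g ≠ 0) :
      (Fintype.card R : ℂ) * Nat.card {z : R × R // z.1 ∈ D ∧ z.2 ∈ D ∧ z.1 - z.2 = g} =
        s 0 ^ 2 - c := by
    rw [card_sub_eq_eq_sum, card_mul_sum_sub_eq hψ]
    simp_rw [show fourierSum ψ (D.indicator 1) = s from rfl, spectrum, add_mul, ite_mul, zero_mul,
      sum_add_distrib, ← mul_sum, AddChar.sum_mulShift _ hψ]
    simp [hg]
  refine ⟨Nat.card {z : R × R // z.1 ∈ D ∧ z.2 ∈ D ∧ z.1 - z.2 = 1}, fun g hg ↦ ?_⟩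
  have : Nontrivial R := nontrivial_of_ne g 0 hg
  have hcard : (Fintype.card R : ℂ) ≠ 0 := Nat.cast_ne_zero.mpr Fintype.card_ne_zero
  exact_mod_cast mul_left_cancel₀ hcard ((count hg).trans (count one_ne_zero).symm)

lemma fourierSum_skewIndicator (D : Set R) (a : R) :
    fourierSum ψ (skewIndicator D) a =
      fourierSum ψ (D.indicator 1) a - fourierSum ψ (D.indicator 1) (-a) := by
  rw [← fourierSum_comp_neg, fourierSum, fourierSum, fourierSum, ← sum_sub_distrib]
  simp only [skewIndicator, sub_mul]

lemma fourierSum_indicator_add_neg (hψ : ψ.IsPrimitive) {D : Set R} (h0 : 0 ∉ D)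
    (hskew : ∀ g ≠ 0, g ∈ D ↔ -g ∉ D) {a : R} (ha : a ≠ 0) :
    fourierSum ψ (D.indicator 1) a + fourierSum ψ (D.indicator 1) (-a) = -1 := by
  rw [← fourierSum_comp_neg, fourierSum, fourierSum, ← sum_add_distrib]
  simp_rw [← add_mul, indicator_add_indicator_neg h0 hskew, sub_mul, one_mul, sum_sub_distrib,
    mul_comm a, AddChar.sum_mulShift _ hψ]
  simp [ha]

theorem isSkewHadamardDifferenceSet_of_sq_fourierSum (hψ : ψ.IsPrimitive) {D : Set R}
    (h0 : 0 ∉ D) (hskew : ∀ g ≠ 0, g ∈ D ↔ -g ∉ D) {c : ℂ}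
    (hc : ∀ a ≠ 0, fourierSum ψ (skewIndicator D) a ^ 2 = c) :
    IsSkewHadamardDifferenceSet D := by
  refine ⟨h0, hskew, exists_card_sub_eq hψ (c := (1 - c) / 4) fun a ha ↦ ?_⟩
  have hsum := fourierSum_indicator_add_neg hψ h0 hskew ha
  have hdiff := fourierSum_skewIndicator (ψ := ψ) D a
  set s := fourierSum ψ (D.indicator 1)
  calc s a * s (-a) = ((s a + s (-a)) ^ 2 - (s a - s (-a)) ^ 2) / 4 := by ring
    _ = (1 - c) / 4 := by rw [hsum, ← hdiff, hc a ha]; norm_num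

end FourierSum

/-! ### Gauss sums -/

section GaussSum

variable {F : Type*} [Field F] [Fintype F]

/-- The quadratic character of `F` with values in `R`. -/
noncomputable abbrev quadraticMulChar (F R : Type*) [Field F] [Fintype F] [CommRing R] :
    MulChar F R :=
  (quadraticChar F).ringHomComp (Int.castRingHom R)

lemma quadraticMulChar_isQuadratic (F R : Type*) [Field F] [Fintype F] [CommRing R] :
    (quadraticMulChar F R).IsQuadratic :=
  (quadraticChar_isQuadratic F).comp _

lemma quadraticMulChar_coe_mul_self {R : Type*} [CommRing R] {x : F} (hx : x ≠ 0) :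
    quadraticMulChar F R x * quadraticMulChar F R x = 1 := by
  have := congrArg (Int.cast : ℤ → R) (quadraticChar_sq_one hx)
  simpa [sq] using this

lemma sum_comp_sq {R : Type*} [CommRing R] (hF : ringChar F ≠ 2) (g : F → R) :
    ∑ t, g (t ^ 2) = ∑ a, g a * (quadraticMulChar F R a + 1) := by
  rw [← sum_fiberwise univ (· ^ 2)]
  refine sum_congr rfl fun a _ ↦ ?_
  have hsqrts : (quadraticMulChar F R a + 1) = (#{t : F | t ^ 2 = a} : R) := by
    have := congrArg (Int.cast : ℤ → R) (quadraticChar_card_sqrts hF a)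
    simpa [Set.toFinset_ofPred] using this.symm
  rw [hsqrts, sum_congr rfl fun t ht ↦ congrArg g (mem_filter.mp ht).2, sum_const, nsmul_eq_mul,
    mul_comm]

lemma mulChar_four_mul_jacobiSum_self {R : Type*} [CommRing R] [IsDomain R]
    (hF : ringChar F ≠ 2) {χ : MulChar F R} (hχ : χ ≠ 1) :
    χ 4 * jacobiSum χ χ = jacobiSum χ (quadraticMulChar F R) := by
  have h2 : (2 : F) ≠ 0 := Ring.two_ne_zero hF
  -- substitute `x = (1 + t) / 2`
  have complete_square : χ 4 * jacobiSum χ χ = ∑ t, χ (1 - t ^ 2) := by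
    rw [jacobiSum, mul_sum, ← Equiv.sum_comp
      ((Equiv.addLeft (1 : F)).trans (Equiv.mulLeft₀ (2 : F)⁻¹ (inv_ne_zero h2)))]
    refine sum_congr rfl fun t _ ↦ ?_
    rw [← map_mul, ← map_mul]
    congr 1
    simp only [Equiv.trans_apply, Equiv.coe_addLeft, Equiv.mulLeft₀_apply]
    field_simp
    ring
  have sum_shift : ∑ a, χ (1 - a) = 0 := by
    rw [← MulChar.sum_eq_zero_of_ne_one hχ]
    exact Equiv.sum_comp (Equiv.subLeft (1 : F)) χ
  rw [complete_square, sum_comp_sq hF fun a ↦ χ (1 - a), jacobiSum_comm, jacobiSum]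
  simp_rw [mul_add, mul_one, sum_add_distrib, sum_shift, add_zero, mul_comm]

/-- The quadratic case of the Hasse–Davenport product formula. -/
lemma mulChar_four_mul_gaussSum_mul_gaussSum (hF : ringChar F ≠ 2) {χ : MulChar F ℂ}
    (hχ : χ ^ 2 ≠ 1) {ψ : AddChar F ℂ} (hψ : ψ.IsPrimitive) :
    χ 4 * gaussSum χ ψ * gaussSum (χ * quadraticMulChar F ℂ) ψ =
      gaussSum (χ ^ 2) ψ * gaussSum (quadraticMulChar F ℂ) ψ := by
  have hρ := (quadraticMulChar_isQuadratic F ℂ).sq_eq_one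
  set ρ := quadraticMulChar F ℂ
  have hχ1 : χ ≠ 1 := by rintro rfl; simp at hχ
  have hχρ : χ * ρ ≠ 1 := fun h ↦ hχ <|
    calc χ ^ 2 = (χ * ρ) ^ 2 := by rw [mul_pow, hρ, mul_one]
      _ = 1 := by rw [h, one_pow]
  have hne : gaussSum χ ψ ≠ 0 := gaussSum_ne_zero_of_nontrivial (by simp) hχ1 hψ
  have hχχ := jacobiSum_mul_nontrivial (sq χ ▸ hχ) ψ
  have hJρ := jacobiSum_mul_nontrivial hχρ ψ
  rw [← sq χ] at hχχ
  rw [← mulChar_four_mul_jacobiSum_self hF hχ1] at hJρ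
  refine mul_left_cancel₀ hne ?_
  linear_combination gaussSum (χ ^ 2) ψ * hJρ - χ 4 * gaussSum (χ * ρ) ψ * hχχ

lemma exists_isPrimitive_addChar_pow_char (F : Type*) [Field F] [Finite F] (p : ℕ)
    [Fact p.Prime] [CharP F p] :
    ∃ ψ : AddChar F ℂ, ψ.IsPrimitive ∧ ∀ x, ψ (x ^ p) = ψ x := by
  let _ : Algebra (ZMod p) F := ZMod.algebra F p
  refine ⟨ZMod.stdAddChar.compAddMonoidHom (Algebra.trace (ZMod p) F).toAddMonoidHom, ?_, ?_⟩
  · apply AddChar.IsPrimitive.of_ne_one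
    obtain ⟨b, hb⟩ := Algebra.trace_surjective (ZMod p) F 1
    refine AddChar.ne_one_iff.mpr ⟨b, fun h ↦ one_ne_zero (α := ZMod p) ?_⟩
    apply ZMod.injective_stdAddChar
    simpa [hb] using h
  · intro x
    have := Algebra.trace_eq_of_algEquiv (FiniteField.frobeniusAlgEquiv (ZMod p) F p) x
    simpa using congrArg ZMod.stdAddChar this

lemma gaussSum_pow_char_pow {R : Type*} [CommRing R] (p : ℕ) [Fact p.Prime] [CharP F p]
    {ψ : AddChar F R} (hψp : ∀ x, ψ (x ^ p) = ψ x) (χ : MulChar F R) (j : ℕ) :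
    gaussSum (χ ^ p ^ j) ψ = gaussSum χ ψ := by
  induction j generalizing χ with
  | zero => rw [pow_zero, pow_one]
  | succ j ih =>
    rw [pow_succ, pow_mul, ← ih χ]
    unfold gaussSum
    conv_rhs => rw [← Equiv.sum_comp (frobeniusEquiv F p).toEquiv]
    refine sum_congr rfl fun x _ ↦ ?_
    simp [MulChar.pow_apply' _ (NeZero.ne p), frobenius_def, hψp]

lemma two_pow_char_pow (F : Type*) [CommRing F] (p : ℕ) [Fact p.Prime] [CharP F p] (j : ℕ) :
    (2 : F) ^ p ^ j = 2 := by
  rw [← iterate_frobenius, ← Nat.cast_ofNat]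
  exact Function.iterate_fixed (map_natCast (frobenius F p) 2) j

theorem gaussSum_mul_quadraticMulChar (p : ℕ) [Fact p.Prime] [CharP F p] (hp : p ≠ 2)
    {ψ : AddChar F ℂ} (hψ : ψ.IsPrimitive) (hψp : ∀ x, ψ (x ^ p) = ψ x) {χ : MulChar F ℂ} {j : ℕ}
    (hχ : χ ^ p ^ j = χ ^ 2) :
    gaussSum (χ * quadraticMulChar F ℂ) ψ = gaussSum (quadraticMulChar F ℂ) ψ := by
  rcases eq_or_ne χ 1 with rfl | hχ1
  · rw [one_mul]
  have hF : ringChar F ≠ 2 := by rwa [ringChar.eq F p]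
  have hodd : Odd (p ^ j) := ((Fact.out : p.Prime).odd_of_ne_two hp).pow
  have hχ2 : χ ^ 2 ≠ 1 := fun h ↦ hχ1 <| by
    obtain ⟨k, hk⟩ := hodd
    rwa [hk, pow_succ, pow_mul, h, one_pow, one_mul] at hχ
  have hχ_two : χ 2 = 1 := by
    have h2 : IsUnit (χ 2) := (Ring.two_ne_zero hF).isUnit.map χ
    have := congrArg (fun θ : MulChar F ℂ ↦ θ 2) hχ
    simp only [MulChar.pow_apply' _ hodd.pos.ne', MulChar.pow_apply' _ two_ne_zero,
      ← map_pow χ 2 (p ^ j), two_pow_char_pow F p] at this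
    exact h2.mul_left_cancel (by rw [← sq, mul_one, ← this])
  have hχ_four : χ 4 = 1 := by
    rw [show (4 : F) = 2 * 2 by norm_num, map_mul, hχ_two, one_mul]
  have hsq : gaussSum (χ ^ 2) ψ = gaussSum χ ψ := by rw [← hχ, gaussSum_pow_char_pow p hψp]
  have hne : gaussSum χ ψ ≠ 0 := gaussSum_ne_zero_of_nontrivial (by simp) hχ1 hψ
  have := mulChar_four_mul_gaussSum_mul_gaussSum hF hχ2 hψ
  rw [hχ_four, one_mul, hsq] at this
  exact mul_left_cancel₀ hne this

lemma fourierSum_of_mem_span {ψ : AddChar F ℂ} {S : Set (MulChar F ℂ)} {G : ℂ}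
    (hS : ∀ χ ∈ S, gaussSum χ ψ = G) {e : F → ℂ}
    (he : e ∈ Submodule.span ℂ ((fun χ : MulChar F ℂ ↦ (χ : F → ℂ)) '' S)) {a : F} (ha : a ≠ 0) :
    fourierSum ψ e a = e a⁻¹ * G := by
  induction he using Submodule.span_induction with
  | mem _ h =>
    obtain ⟨χ, hχ, rfl⟩ := h
    rw [← hS χ hχ]
    simp only [← MulChar.inv_apply']
    exact gaussSum_mulShift_eq χ ψ (Units.mk0 a ha)
  | zero => simp [fourierSum]
  | add e₁ e₂ _ _ h₁ h₂ =>
    rw [Pi.add_apply, add_mul, ← h₁, ← h₂]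
    simp only [fourierSum, Pi.add_apply, add_mul, sum_add_distrib]
  | smul c e _ h =>
    rw [Pi.smul_apply, smul_mul_assoc, ← h]
    simp only [fourierSum, Pi.smul_apply, smul_mul_assoc, smul_sum]

end GaussSum

/-! ### Functions invariant under multiplication by powers -/

section PowerInvariant

variable {F : Type*} [Field F] {M : ℕ}

/-- A character of the group of units modulo `M`-th powers, as a multiplicative character of the
field. -/
noncomputable def mulCharOfUnitsModPow
    (φ : AddChar (Additive (Fˣ ⧸ (powMonoidHom M : Fˣ →* Fˣ).range)) ℂ) : MulChar F ℂ :=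
  .ofUnitHom (φ.toMonoidHom.comp (QuotientGroup.mk' _)).toHomUnits

lemma mulCharOfUnitsModPow_coe_units
    (φ : AddChar (Additive (Fˣ ⧸ (powMonoidHom M : Fˣ →* Fˣ).range)) ℂ) (u : Fˣ) :
    mulCharOfUnitsModPow φ u = φ (.ofMul (u : Fˣ ⧸ (powMonoidHom M : Fˣ →* Fˣ).range)) := by
  rw [mulCharOfUnitsModPow, MulChar.ofUnitHom_coe]
  rfl

lemma mulCharOfUnitsModPow_pow
    (φ : AddChar (Additive (Fˣ ⧸ (powMonoidHom M : Fˣ →* Fˣ).range)) ℂ) :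
    mulCharOfUnitsModPow φ ^ M = 1 := by
  ext u
  have hu : ((u ^ M : Fˣ) : Fˣ ⧸ (powMonoidHom M : Fˣ →* Fˣ).range) = 1 :=
    (QuotientGroup.eq_one_iff _).mpr ⟨u, rfl⟩
  rw [MulChar.pow_apply_coe, MulChar.one_apply_coe, ← map_pow, ← Units.val_pow_eq_pow_val,
    mulCharOfUnitsModPow_coe_units, hu, ofMul_one, AddChar.map_zero_eq_one]

lemma mem_span_mulChar_of_mul_pow_eq [Finite F] {w : F → ℂ} (h0 : w 0 = 0)
    (hw : ∀ (x : F) (u : Fˣ), w (x * (u : F) ^ M) = w x) :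
    w ∈ Submodule.span ℂ
      ((fun χ : MulChar F ℂ ↦ (χ : F → ℂ)) '' {χ : MulChar F ℂ | χ ^ M = 1}) := by
  have := Fintype.ofFinite F
  let P := (powMonoidHom M : Fˣ →* Fˣ).range
  have hwP (u v : Fˣ) (huv : QuotientGroup.leftRel P u v) : w u = w v := by
    obtain ⟨t, ht⟩ := QuotientGroup.leftRel_apply.mp huv
    have hv : v = u * t ^ M := by rw [← mul_inv_cancel_left u v, ← ht]; rfl
    rw [hv, Units.val_mul, Units.val_pow_eq_pow_val, hw]
  let w' : Additive (Fˣ ⧸ P) → ℂ := fun z ↦ Quotient.lift (fun u : Fˣ ↦ w u) hwP z.toMul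
  have hsum : w = ∑ φ, (AddChar.complexBasis (Additive (Fˣ ⧸ P))).repr w' φ •
      (mulCharOfUnitsModPow φ : F → ℂ) := by
    ext x
    rw [Finset.sum_apply]
    rcases eq_or_ne x 0 with rfl | hx
    · simp [h0, MulChar.map_zero]
    · lift x to Fˣ using hx.isUnit
      have := congrFun ((AddChar.complexBasis _).sum_repr w') (.ofMul (x : Fˣ ⧸ P))
      rw [Finset.sum_apply] at this
      simpa [w', mulCharOfUnitsModPow_coe_units] using this.symm
  rw [hsum]
  exact Submodule.sum_mem _ fun φ _ ↦ Submodule.smul_mem _ _ <|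
    Submodule.subset_span ⟨_, mulCharOfUnitsModPow_pow φ, rfl⟩

variable [Fintype F]

lemma skewIndicator_mul_pow (hM : Odd M) (hneg : ¬IsSquare (-1 : F)) {D : Set F}
    (hD : ∀ x ∈ D, ∀ y ≠ 0, x * y ^ (2 * M) ∈ D) (x : F) {y : F} (hy : y ≠ 0) :
    skewIndicator D (x * y ^ M) = quadraticMulChar F ℂ y * skewIndicator D x := by
  have hmem (x : F) {z : F} (hz : z ≠ 0) : x * z ^ (2 * M) ∈ D ↔ x ∈ D := by
    refine ⟨fun h ↦ ?_, fun h ↦ hD x h z hz⟩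
    simpa [mul_assoc, ← mul_pow, hz] using hD _ h z⁻¹ (inv_ne_zero hz)
  have hsq (x : F) {z : F} (hz : z ≠ 0) :
      skewIndicator D (x * z ^ (2 * M)) = skewIndicator D x := by
    simp only [skewIndicator, ← neg_mul, Set.indicator_apply, Pi.one_apply, hmem _ hz]
  rcases quadraticChar_dichotomy hy with hχ | hχ
  · obtain ⟨z, rfl⟩ := (quadraticChar_one_iff_isSquare hy).mp hχ
    rw [MulChar.ringHomComp_apply, hχ, map_one, one_mul, ← sq, ← pow_mul,
      hsq x (left_ne_zero_of_mul hy)]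
  · have hχ' : quadraticChar F (-y) = 1 := by
      rw [← neg_one_mul, map_mul, hχ, quadraticChar_neg_one_iff_not_isSquare.mpr hneg, neg_mul_neg,
        one_mul]
    obtain ⟨z, hz⟩ := (quadraticChar_one_iff_isSquare (neg_ne_zero.mpr hy)).mp hχ'
    have hz0 : z ≠ 0 := left_ne_zero_of_mul (hz ▸ neg_ne_zero.mpr hy)
    rw [MulChar.ringHomComp_apply, hχ, ← neg_neg y, hz, hM.neg_pow, mul_neg, skewIndicator_neg,
      ← sq, ← pow_mul, hsq x hz0]
    simp

lemma skewIndicator_mem_span_mulChar (hM : Odd M) (hneg : ¬IsSquare (-1 : F)) {D : Set F}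
    (hD : ∀ x ∈ D, ∀ y ≠ 0, x * y ^ (2 * M) ∈ D) :
    skewIndicator D ∈ Submodule.span ℂ ((fun χ : MulChar F ℂ ↦ (χ : F → ℂ)) ''
      ((· * quadraticMulChar F ℂ) '' {χ : MulChar F ℂ | χ ^ M = 1})) := by
  set ρ := quadraticMulChar F ℂ
  let w : F → ℂ := skewIndicator D * ρ
  have hw : w ∈ Submodule.span ℂ
      ((fun χ : MulChar F ℂ ↦ (χ : F → ℂ)) '' {χ : MulChar F ℂ | χ ^ M = 1}) := by
    refine mem_span_mulChar_of_mul_pow_eq (by simp [w, MulChar.map_zero]) fun x u ↦ ?_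
    have hρM : ρ ((u : F) ^ M) = ρ u := by
      obtain ⟨k, rfl⟩ := hM
      rw [map_pow, pow_succ, pow_mul, sq, quadraticMulChar_coe_mul_self u.ne_zero, one_pow, one_mul]
    simp only [w, Pi.mul_apply, skewIndicator_mul_pow hM hneg hD x u.ne_zero, map_mul, hρM]
    linear_combination
      skewIndicator D x * ρ x * quadraticMulChar_coe_mul_self (R := ℂ) u.ne_zero
  have hwρ : skewIndicator D = LinearMap.mulRight ℂ (ρ : F → ℂ) w := by
    ext x
    rcases eq_or_ne x 0 with rfl | hx
    · simp [skewIndicator, MulChar.map_zero]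
    · calc skewIndicator D x = skewIndicator D x * (ρ x * ρ x) := by
            rw [quadraticMulChar_coe_mul_self hx, mul_one]
        _ = w x * ρ x := (mul_assoc _ _ _).symm
  have hmul := Submodule.mem_map_of_mem (f := LinearMap.mulRight ℂ (ρ : F → ℂ)) hw
  rw [← hwρ, Submodule.map_span, Set.image_image] at hmul
  rw [Set.image_image]
  exact hmul

end PowerInvariant

lemma odd_of_odd_modEq_two {a M : ℕ} (ha : Odd a) (h : a ≡ 2 [MOD M]) : Odd M := by
  by_contra hM
  have := h.of_dvd (even_iff_two_dvd.mp (Nat.not_odd_iff_even.mp hM))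
  rw [Nat.ModEq, Nat.odd_iff.mp ha] at this
  omega

lemma not_isSquare_neg_one_of_mul_pow_mem {F : Type*} [Field F] {M : ℕ} (hM : Odd M) {D : Set F}
    (hskew : ∀ g ≠ 0, g ∈ D ↔ -g ∉ D)
    (hD : ∀ x ∈ D, ∀ y ≠ 0, x * y ^ (2 * M) ∈ D) : ¬IsSquare (-1 : F) := by
  rintro ⟨y, hy⟩
  have hy0 : y ≠ 0 := by rintro rfl; simp at hy
  have hpow : y ^ (2 * M) = -1 := by rw [pow_mul, sq, ← hy, hM.neg_one_pow]
  have h1 := hskew 1 one_ne_zero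
  by_cases h1D : (1 : F) ∈ D
  · exact h1.mp h1D (by simpa [hpow] using hD 1 h1D y hy0)
  · exact h1D (by simpa [hpow] using hD (-1) (not_not.mp (mt h1.mpr h1D)) y hy0)

theorem isSkewHadamardDifferenceSet_of_mul_pow_mem {F : Type*} [Field F] [Finite F] (p : ℕ)
    [Fact p.Prime] [CharP F p] {M j : ℕ} (hj : p ^ j ≡ 2 [MOD M]) {D : Set F} (h0 : 0 ∉ D)
    (hskew : ∀ g ≠ 0, g ∈ D ↔ -g ∉ D) (hD : ∀ x ∈ D, ∀ y ≠ 0, x * y ^ (2 * M) ∈ D) :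
    IsSkewHadamardDifferenceSet D := by
  have := Fintype.ofFinite F
  have hp2 : p ≠ 2 := by
    rintro rfl
    simpa [CharTwo.neg_eq] using hskew 1 one_ne_zero
  have hM : Odd M := odd_of_odd_modEq_two ((Fact.out : p.Prime).odd_of_ne_two hp2).pow hj
  have hneg := not_isSquare_neg_one_of_mul_pow_mem hM hskew hD
  obtain ⟨ψ, hψ, hψp⟩ := exists_isPrimitive_addChar_pow_char F p
  set ρ := quadraticMulChar F ℂ
  have hgauss : ∀ θ ∈ (· * ρ) '' {χ : MulChar F ℂ | χ ^ M = 1}, gaussSum θ ψ = gaussSum ρ ψ := by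
    rintro _ ⟨χ, hχ, rfl⟩
    refine gaussSum_mul_quadraticMulChar p hp2 hψ hψp (j := j) ?_
    exact pow_eq_pow_iff_modEq.mpr (hj.of_dvd (orderOf_dvd_of_pow_eq_one hχ))
  refine isSkewHadamardDifferenceSet_of_sq_fourierSum hψ h0 hskew (c := gaussSum ρ ψ ^ 2)
    fun a ha ↦ ?_
  rw [fourierSum_of_mem_span hgauss (skewIndicator_mem_span_mulChar hM hneg hD) ha, mul_pow,
    skewIndicator_sq hskew (inv_ne_zero ha), one_mul]

/-! ### Cyclotomic classes -/

section Cyclotomic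

variable {F : Type*} [Field F] {γ : Fˣ} {M N i : ℕ}

lemma zero_notMem_cycClass : (0 : F) ∉ cycClass γ N i :=
  fun ⟨_, h⟩ ↦ Units.ne_zero _ h.symm

lemma mul_pow_mem_cycClass (hγ : ∀ x : Fˣ, x ∈ Subgroup.zpowers γ) {x y : F}
    (hx : x ∈ cycClass γ N i) (hy : y ≠ 0) : x * y ^ N ∈ cycClass γ N i := by
  obtain ⟨k, rfl⟩ := hx
  obtain ⟨l, hl⟩ := Subgroup.mem_zpowers_iff.mp (hγ (Units.mk0 y hy))
  refine ⟨k + l, ?_⟩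
  rw [mul_add, ← add_assoc, zpow_add γ (i + N * k), mul_comm (N : ℤ) l, zpow_mul γ l, hl]
  simp

lemma zpow_mem_cycClass_iff (hN : N ∣ orderOf γ) {k : ℤ} :
    ((γ ^ k : Fˣ) : F) ∈ cycClass γ N i ↔ k ≡ i [ZMOD N] := by
  constructor
  · rintro ⟨t, ht⟩
    have h : k ≡ i + N * t [ZMOD N] :=
      (zpow_eq_zpow_iff_modEq.mp (Units.ext ht)).of_dvd (Int.natCast_dvd_natCast.mpr hN)
    simpa [Int.ModEq] using h
  · intro h
    obtain ⟨t, ht⟩ := h.symm.dvd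
    exact ⟨t, by rw [← ht, add_sub_cancel]⟩

lemma zpow_mem_iUnion_cycClass_iff (hM : 2 * M ∣ orderOf γ) {I : Set ℕ}
    (hI : I.InjOn fun i : ℕ ↦ (i : ZMod M)) (hi : i ∈ I) {k : ℤ} (hk : k ≡ i [ZMOD M]) :
    ((γ ^ k : Fˣ) : F) ∈ ⋃ i ∈ I, cycClass γ (2 * M) i ↔ k ≡ i [ZMOD 2 * M] := by
  simp only [Set.mem_iUnion₂, zpow_mem_cycClass_iff hM, exists_prop, Nat.cast_mul, Nat.cast_ofNat]
  refine ⟨fun ⟨i', hi', hk'⟩ ↦ ?_, fun h ↦ ⟨i, hi, h⟩⟩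
  have hii' : (i : ZMod M) = i' := by
    exact_mod_cast (ZMod.intCast_eq_intCast_iff _ _ M).mpr
      (hk.symm.trans (hk'.of_dvd (dvd_mul_left _ _)))
  rwa [hI hi hi' hii']

lemma pow_eq_neg_one_of_orderOf_eq_two_mul {n : ℕ} (hn : n ≠ 0) (hγ : orderOf γ = 2 * n) :
    γ ^ n = -1 := by
  have hroot := (IsPrimitiveRoot.orderOf γ).pow (by omega) (hγ.trans (mul_comm 2 n))
  exact Units.ext (IsPrimitiveRoot.coe_units_iff.mpr hroot).eq_neg_one_of_two_right

lemma modEq_two_mul_iff_not_add_mul_modEq {M k i d : ℤ} (hM : M ≠ 0) (hd : Odd d)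
    (hk : k ≡ i [ZMOD M]) : k ≡ i [ZMOD 2 * M] ↔ ¬k + M * d ≡ i [ZMOD 2 * M] := by
  obtain ⟨t, ht⟩ := hk.symm.dvd
  have dvd_iff (n : ℤ) : 2 * M ∣ M * n ↔ Even n := by
    rw [mul_comm 2, mul_dvd_mul_iff_left hM, even_iff_two_dvd]
  rw [Int.modEq_comm, Int.modEq_iff_dvd, Int.modEq_comm, Int.modEq_iff_dvd, ht,
    show k + M * d - i = M * (t + d) by linear_combination ht, dvd_iff, dvd_iff, Int.even_add,
    iff_false_right (Int.not_even_iff_odd.mpr hd), not_not]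

lemma mem_iUnion_cycClass_iff_neg_notMem (hM : M ≠ 0) {d : ℕ} (hd : Odd d)
    (hord : orderOf γ = 2 * (M * d)) (hγ : ∀ x : Fˣ, x ∈ Subgroup.zpowers γ) {I : Set ℕ}
    (hI : I.BijOn (fun i : ℕ ↦ (i : ZMod M)) Set.univ) {g : F} (hg : g ≠ 0) :
    g ∈ ⋃ i ∈ I, cycClass γ (2 * M) i ↔ -g ∉ ⋃ i ∈ I, cycClass γ (2 * M) i := by
  have hdvd : 2 * M ∣ orderOf γ := ⟨d, by rw [hord, mul_assoc]⟩
  obtain ⟨k, hk⟩ := Subgroup.mem_zpowers_iff.mp (hγ (Units.mk0 g hg))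
  obtain ⟨i, hi, hik⟩ := hI.surjOn (Set.mem_univ (k : ZMod M))
  have hki : k ≡ i [ZMOD M] := by
    rw [← ZMod.intCast_eq_intCast_iff, ← hik, Int.cast_natCast]
  have hki' : k + M * d ≡ i [ZMOD M] := by simpa [Int.ModEq] using hki
  have hgk : g = (γ ^ k : Fˣ) := by rw [hk, Units.val_mk0]
  have hgk' : -g = (γ ^ (k + M * d) : Fˣ) := by
    rw [zpow_add, ← Nat.cast_mul, zpow_natCast,
      pow_eq_neg_one_of_orderOf_eq_two_mul (mul_ne_zero hM hd.pos.ne') hord, hgk]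
    simp
  rw [hgk', hgk, zpow_mem_iUnion_cycClass_iff hdvd hI.injOn hi hki,
    zpow_mem_iUnion_cycClass_iff hdvd hI.injOn hi hki']
  exact modEq_two_mul_iff_not_add_mul_modEq (mod_cast hM) (mod_cast hd) hki

end Cyclotomic

/-! ### Powers modulo a prime power -/

section Arithmetic

lemma mem_zpowers_of_pow_orderOf_eq_one {G : Type*} [CommGroup G] [IsCyclic G] [Finite G]
    {x y : G} (h : x ^ orderOf y = 1) : x ∈ Subgroup.zpowers y := by
  have hle : Subgroup.zpowers y ≤ (powMonoidHom (orderOf y) : G →* G).ker := by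
    rw [Subgroup.zpowers_le]
    exact pow_orderOf_eq_one y
  have hcard : Nat.card (powMonoidHom (orderOf y) : G →* G).ker =
      Nat.card (Subgroup.zpowers y) := by
    rw [IsCyclic.card_powMonoidHom_ker, Nat.card_zpowers,
      Nat.gcd_eq_right (orderOf_dvd_natCard y)]
  rw [Subgroup.eq_of_le_of_card_ge hle hcard.le]
  exact h

lemma orderOf_natCast_two_mul {a M : ℕ} (ha : Odd a) (hM : Odd M) :
    orderOf (a : ZMod (2 * M)) = orderOf (a : ZMod M) := by
  refine Nat.dvd_right_iff_eq.mp fun k ↦ ?_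
  have hcast (n : ℕ) : orderOf (a : ZMod n) ∣ k ↔ a ^ k ≡ 1 [MOD n] := by
    rw [orderOf_dvd_iff_pow_eq_one, ← ZMod.natCast_eq_natCast_iff, Nat.cast_pow, Nat.cast_one]
  rw [hcast, hcast, ← Nat.modEq_and_modEq_iff_modEq_mul (Nat.coprime_two_left.mpr hM)]
  exact and_iff_right (Nat.odd_iff.mp ha.pow)

lemma totient_prime_pow_succ_eq_two_mul {p : ℕ} (hp : p.Prime) (hp2 : p ≠ 2) (k : ℕ) :
    Nat.totient (p ^ (k + 1)) = 2 * (p ^ k * (p / 2)) := by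
  have hodd := Nat.odd_iff.mp (hp.odd_of_ne_two hp2)
  rw [Nat.totient_prime_pow_succ hp, mul_left_comm, show 2 * (p / 2) = p - 1 by omega]

lemma pow_modEq_one_of_isSquare {p : ℕ} [Fact p.Prime] {a : ℕ} (ha0 : (a : ZMod p) ≠ 0)
    (ha : IsSquare (a : ZMod p)) (k : ℕ) : a ^ (p ^ k * (p / 2)) ≡ 1 [MOD p ^ (k + 1)] := by
  have euler : (a ^ (p / 2) : ℤ) ≡ 1 [ZMOD p] := by
    rw [← ZMod.intCast_eq_intCast_iff]
    exact_mod_cast (ZMod.euler_criterion p ha0).mp ha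
  have lift := dvd_sub_pow_of_dvd_sub euler.symm.dvd k
  rw [one_pow, ← pow_mul, mul_comm] at lift
  rw [← Int.natCast_modEq_iff]
  push_cast
  exact (Int.modEq_iff_dvd.mpr lift).symm

lemma exists_pow_modEq_of_pow_orderOf_modEq_one {p n a b : ℕ} (hp : p.Prime) (hp2 : p ≠ 2)
    (ha : orderOf (a : ZMod (p ^ n)) ≠ 0) (hb : b ^ orderOf (a : ZMod (p ^ n)) ≡ 1 [MOD p ^ n]) :
    ∃ j, a ^ j ≡ b [MOD p ^ n] := by
  have := ZMod.isCyclic_units_of_prime_pow p hp hp2 n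
  have : NeZero (p ^ n) := ⟨(pow_pos hp.pos n).ne'⟩
  have hb' : (b : ZMod (p ^ n)) ^ orderOf (a : ZMod (p ^ n)) = 1 := by
    exact_mod_cast (ZMod.natCast_eq_natCast_iff _ _ _).mpr hb
  let u := Units.ofPowEqOne _ _ (pow_orderOf_eq_one (a : ZMod (p ^ n))) ha
  let v := Units.ofPowEqOne _ _ hb' ha
  have hv : v ^ orderOf u = 1 := by
    rw [← orderOf_units]
    exact Units.ext hb'
  obtain ⟨j, hj⟩ := mem_powers_iff_mem_zpowers.mpr (mem_zpowers_of_pow_orderOf_eq_one hv)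
  refine ⟨j, (ZMod.natCast_eq_natCast_iff _ _ _).mp ?_⟩
  rw [Nat.cast_pow]
  exact congrArg Units.val hj

lemma odd_orderOf_and_exists_pow_modEq_two {q m p : ℕ} (hq : q.Prime) (hqmod : q % 8 = 7)
    (hm : 1 ≤ m) (hord : 2 * orderOf (p : ZMod (q ^ m)) = Nat.totient (q ^ m)) :
    Odd (orderOf (p : ZMod (q ^ m))) ∧ ∃ j, p ^ j ≡ 2 [MOD q ^ m] := by
  have : Fact q.Prime := ⟨hq⟩
  have hq2 : q ≠ 2 := by omega
  have htwo : (2 : ZMod q) ≠ 0 := Ring.two_ne_zero (by rwa [ZMod.ringChar_zmod_n])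
  obtain ⟨k, rfl⟩ := Nat.exists_eq_add_of_le' hm
  rw [totient_prime_pow_succ_eq_two_mul hq hq2, Nat.mul_right_inj two_ne_zero] at hord
  have hodd : Odd (orderOf (p : ZMod (q ^ (k + 1)))) :=
    hord ▸ (hq.odd_of_ne_two hq2).pow.mul (Nat.odd_iff.mpr (by omega))
  refine ⟨hodd, exists_pow_modEq_of_pow_orderOf_modEq_one hq hq2 hodd.pos.ne' ?_⟩
  rw [hord]
  exact pow_modEq_one_of_isSquare htwo ((ZMod.exists_sq_eq_two_iff hq2).mpr (.inr hqmod)) k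

lemma exists_odd_sub_one_eq_two_mul {q M : ℕ} (hM : Odd M) (hq : q % 4 = 3)
    (hqM : q ≡ 1 [MOD M]) : ∃ d, Odd d ∧ q - 1 = 2 * (M * d) := by
  have hhalf : 2 * (q / 2) = q - 1 := by omega
  obtain ⟨d, hd⟩ : M ∣ q / 2 := by
    refine (Nat.coprime_two_right.mpr hM).dvd_of_dvd_mul_left ?_
    rw [hhalf]
    exact (Nat.modEq_iff_dvd' (by omega)).mp hqM.symm
  have hodd : Odd (M * d) := hd ▸ Nat.odd_iff.mpr (by omega)
  exact ⟨d, (Nat.odd_mul.mp hodd).2, by rw [← hd, hhalf]⟩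

lemma pow_mod_four_of_odd {a n : ℕ} (ha : a % 4 = 3) (hn : Odd n) : a ^ n % 4 = 3 := by
  obtain ⟨k, rfl⟩ := hn
  simp [pow_succ, pow_mul, Nat.mul_mod, Nat.pow_mod, ha]

end Arithmetic

theorem statement_4_general {F : Type*} [Field F] [Fintype F] (p : ℕ) [Fact p.Prime] [CharP F p]
    {M j : ℕ} (hq : Fintype.card F % 4 = 3) (hqM : Fintype.card F ≡ 1 [MOD M])
    (hj : p ^ j ≡ 2 [MOD M]) {γ : Fˣ} (hγ : ∀ x : Fˣ, x ∈ Subgroup.zpowers γ) {I : Set ℕ}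
    (hI : I.BijOn (fun i : ℕ ↦ (i : ZMod M)) Set.univ) :
    IsSkewHadamardDifferenceSet (⋃ i ∈ I, cycClass γ (2 * M) i) := by
  have hp2 : p ≠ 2 := by
    rintro rfl
    have := FiniteField.even_card_iff_char_two.mp (ringChar.eq F 2)
    omega
  have hM : Odd M := odd_of_odd_modEq_two ((Fact.out : p.Prime).odd_of_ne_two hp2).pow hj
  obtain ⟨d, hd, hqd⟩ := exists_odd_sub_one_eq_two_mul hM hq hqM
  have hord : orderOf γ = 2 * (M * d) := by
    rw [orderOf_eq_card_of_forall_mem_zpowers hγ, Nat.card_units, Nat.card_eq_fintype_card, hqd]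
  refine isSkewHadamardDifferenceSet_of_mul_pow_mem p hj ?_ ?_ ?_
  · simp [zero_notMem_cycClass]
  · exact fun g hg ↦ mem_iUnion_cycClass_iff_neg_notMem hM.pos.ne' hd hord hγ hI hg
  · simp only [Set.mem_iUnion₂]
    rintro x ⟨i, hi, hx⟩ y hy
    exact ⟨i, hi, mul_pow_mem_cycClass hγ hx hy⟩

/-- Theorem 1.3(i) of the paper, the case `p ≡ 3 (mod 4)`. -/
theorem statement_4 (p₁ m : ℕ) (hp₁ : p₁.Prime) (hp₁mod : p₁ % 8 = 7)
    (hm : 1 ≤ m) (N : ℕ) (hN : N = 2 * p₁ ^ m)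
    (p : ℕ) (hp : p.Prime) (hpmod : p % 4 = 3)
    (f : ℕ) (hf : f = orderOf ((p : ZMod N))) (hford : 2 * f = Nat.totient N)
    (s : ℕ) (hs : Odd s) (hspos : 0 < s)
    (F : Type*) [Field F] [Fintype F] (hcard : Fintype.card F = p ^ (f * s))
    (γ : Fˣ) (hγ : ∀ x : Fˣ, x ∈ Subgroup.zpowers γ)
    (I : Finset ℕ) (hIN : ∀ i ∈ I, i < N)
    (hI : Set.BijOn (fun i : ℕ => (i : ZMod (p₁ ^ m))) ↑I Set.univ)
    (D : Set F) (hD : D = ⋃ i ∈ I, cycClass γ N i) :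
    IsSkewHadamardDifferenceSet D := by
  subst hN hD
  have : Fact p.Prime := ⟨hp⟩
  have : CharP F p := charP_of_card_eq_prime_pow hcard
  rw [orderOf_natCast_two_mul (Nat.odd_iff.mpr (by omega)) (Nat.odd_iff.mpr (by omega)).pow] at hf
  rw [Nat.totient_two_mul_of_odd (Nat.odd_iff.mpr (by omega)).pow, hf] at hford
  obtain ⟨hfodd, j, hj⟩ := odd_orderOf_and_exists_pow_modEq_two hp₁ hp₁mod hm hford
  refine statement_4_general p (j := j) ?_ ?_ hj hγ hI
  · rw [hcard]
    exact pow_mod_four_of_odd hpmod (hf ▸ hfodd.mul hs)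
  · rw [hcard, pow_mul, hf, ← ZMod.natCast_eq_natCast_iff]
    simp [pow_orderOf_eq_one]
end

section
/- Let N = p₁^m p₂^n, where m, n ≥ 1 and p₁, p₂ are primes with p₁ ≡ 1 (mod 4) and p₂ ≡ 3 (mod 4). Let p be a prime with ord_{p₁^m}(p) = φ(p₁^m), ord_{p₂^n}(p) = φ(p₂^n), and f := ord_N(p) = φ(N)/2. Let q = p^f, let γ be a primitive element of F_q, let C_i = γ^i⟨γ^N⟩ be the cyclotomic classes of order N, and let D = ⋃_{i=0}^{p₁^{m−1}−1} ⋃_{j=0}^{p₂^{n−1}−1} C_{p₂^n i + p₁^m j}. Then the set {Σ_{x∈D} ψ(γ^a x) : a = 0, 1, …, q−2} of character sums has at most five elements. -/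
open scoped Classical

/-- The canonical additive character `ψ(x) = exp(2πi·Tr_{q/p}(x)/p)` of a finite field of
characteristic `p`. -/
noncomputable def psi (p : ℕ) {F : Type*} [Field F] [Fintype F] [Algebra (ZMod p) F]
    (x : F) : ℂ :=
  Complex.exp (2 * Real.pi * Complex.I * ((Algebra.trace (ZMod p) F x).val : ℂ) / p)

/-! The sum over `γ^a D` is a double sum of Gauss periods over a translate of the index set of `D`
in `ℤ/N ≅ ℤ/p₁^m × ℤ/p₂^n`, in each factor a transversal of the kernel `K` of
`ℤ/r^k → ℤ/r^(k-1)`. By Frobenius, the periods are invariant under `H = ⟨p⟩`, which has index two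
in the unit group and so contains all squares. Residues that agree modulo `r^(k-1)` and are nonzero
there differ by a factor `≡ 1 mod r`; such a factor is a square, as `r` is odd, hence the period
does not distinguish them. So the double sum depends only on the two points where the transversals
meet `K₁` and `K₂`, in fact only on the `H`-orbit of this pair. Each `Kᵢ` is zero together with one
orbit of units and `H` projects onto both unit groups, so `K₁ × K₂` has three `H`-orbits with a zero
coordinate and two without. -/

section GroupTheory

variable {G G₁ G₂ A B M : Type*} [Group G] [Group G₁] [Group G₂] [MulAction G₁ A] [MulAction G₂ B]

theorem zpowers_eq_top_of_orderOf_eq_card [Finite G] {g : G} (hg : orderOf g = Nat.card G) :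
    Subgroup.zpowers g = ⊤ :=
  Subgroup.eq_top_of_card_eq _ (by rw [Nat.card_zpowers, hg])

theorem index_zpowers_mul_orderOf (g : G) :
    (Subgroup.zpowers g).index * orderOf g = Nat.card G := by
  rw [← Nat.card_zpowers, Subgroup.index_mul_card]

theorem exists_mk_mem_zpowers_of_zpowers_fst_eq_top {g₁ : G₁} (hg₁ : Subgroup.zpowers g₁ = ⊤)
    (g₂ : G₂) (u : G₁) : ∃ v, (u, v) ∈ Subgroup.zpowers (g₁, g₂) := by
  obtain ⟨k, rfl⟩ : u ∈ Subgroup.zpowers g₁ := hg₁ ▸ Subgroup.mem_top u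
  exact ⟨g₂ ^ k, k, rfl⟩

theorem exists_mk_mem_zpowers_of_zpowers_snd_eq_top (g₁ : G₁) {g₂ : G₂}
    (hg₂ : Subgroup.zpowers g₂ = ⊤) (v : G₂) : ∃ u, (u, v) ∈ Subgroup.zpowers (g₁, g₂) := by
  obtain ⟨k, rfl⟩ : v ∈ Subgroup.zpowers g₂ := hg₂ ▸ Subgroup.mem_top v
  exact ⟨g₁ ^ k, k, rfl⟩

theorem apply_smul_smul_of_mem_zpowers {f : A → B → M} {g h : G₁ × G₂}
    (hf : ∀ x y, f (g.1 • x) (g.2 • y) = f x y) (hh : h ∈ Subgroup.zpowers g) (x : A) (y : B) :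
    f (h.1 • x) (h.2 • y) = f x y := by
  rw [Subgroup.zpowers_eq_closure] at hh
  induction hh using Subgroup.closure_induction generalizing x y with
  | mem h hh => rw [Set.mem_singleton_iff.1 hh, hf]
  | one => simp only [Prod.fst_one, Prod.snd_one, one_smul]
  | mul h h' _ _ ih ih' => simp only [Prod.fst_mul, Prod.snd_mul, mul_smul, ih, ih']
  | inv h _ ih => rw [← ih, Prod.fst_inv, Prod.snd_inv, smul_inv_smul, smul_inv_smul]

theorem encard_image2_insert_orbit_le_five {H : Subgroup (G₁ × G₂)} (hH : H.index = 2)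
    (hfst : ∀ u, ∃ v, (u, v) ∈ H) (hsnd : ∀ v, ∃ u, (u, v) ∈ H) {a₀ a₁ : A} {b₀ b₁ : B}
    (ha₀ : ∀ u : G₁, u • a₀ = a₀) (hb₀ : ∀ v : G₂, v • b₀ = b₀) {T : A → B → M}
    (hT : ∀ h ∈ H, ∀ a ∈ insert a₀ (MulAction.orbit G₁ a₁),
      ∀ b ∈ insert b₀ (MulAction.orbit G₂ b₁), T (h.1 • a) (h.2 • b) = T a b) :
    (Set.image2 T (insert a₀ (MulAction.orbit G₁ a₁))
      (insert b₀ (MulAction.orbit G₂ b₁))).encard ≤ 5 := by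
  have mem_a (u : G₁) : u • a₁ ∈ insert a₀ (MulAction.orbit G₁ a₁) := .inr ⟨u, rfl⟩
  have mem_b (v : G₂) : v • b₁ ∈ insert b₀ (MulAction.orbit G₂ b₁) := .inr ⟨v, rfl⟩
  have mem_a₁ := one_smul G₁ a₁ ▸ mem_a 1
  have mem_b₁ := one_smul G₂ b₁ ▸ mem_b 1
  obtain ⟨g, hg⟩ : ∃ g, g ∉ H := by
    by_contra! h
    simp [(Subgroup.eq_top_iff' H).2 h] at hH
  let V : Finset M := {T a₀ b₀, T a₀ b₁, T a₁ b₀, T a₁ b₁, T (g.1 • a₁) (g.2 • b₁)}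
  suffices hV : Set.image2 T (insert a₀ (MulAction.orbit G₁ a₁))
      (insert b₀ (MulAction.orbit G₂ b₁)) ⊆ V by
    refine (Set.encard_le_encard hV).trans ?_
    rw [Set.encard_coe_eq_coe_finsetCard]
    exact_mod_cast Finset.card_le_five
  rintro _ ⟨_, rfl | ⟨u, rfl⟩, _, rfl | ⟨v, rfl⟩, rfl⟩
  · simp [V]
  · obtain ⟨u, huv⟩ := hsnd v
    have := hT _ huv _ (.inl rfl) _ mem_b₁
    simp_all [V]
  · obtain ⟨v, huv⟩ := hfst u
    have := hT _ huv _ mem_a₁ _ (.inl rfl)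
    simp_all [V]
  · by_cases huv : (u, v) ∈ H
    · have := hT _ huv _ mem_a₁ _ mem_b₁
      simp_all [V]
    · have hmem : (u, v) * g⁻¹ ∈ H := by
        simp only [Subgroup.mul_mem_iff_of_index_two hH, inv_mem_iff, huv, hg]
      have := hT _ hmem _ (mem_a g.1) _ (mem_b g.2)
      simp_all [V, mul_smul]

end GroupTheory

section Transversal

variable {R Q R₁ R₂ Q₁ Q₂ ι κ ι₁ ι₂ κ₁ κ₂ M : Type*}

/-- A transversal of the fibres of `π`, given as a family `s`, together with the point `b` at which
it meets the fibre over zero. -/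
structure IsTransversalThrough [Zero Q] (π : R → Q) (s : ι → R) (b : R) : Prop where
  bijective : Function.Bijective (π ∘ s)
  mem_range : b ∈ Set.range s
  map_eq_zero : π b = 0

namespace IsTransversalThrough

theorem eq_of_map_eq_zero [Zero Q] {π : R → Q} {s : ι → R} {b : R}
    (hs : IsTransversalThrough π s b) {i : ι} (hi : π (s i) = 0) : s i = b := by
  obtain ⟨j, rfl⟩ := hs.mem_range
  exact congrArg s (hs.bijective.injective (hi.trans hs.map_eq_zero.symm))

theorem sum_eq [Fintype ι] [Fintype κ] [AddCommMonoid M] [Zero Q] {π : R → Q} {s : ι → R}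
    {t : κ → R} {b : R} (hs : IsTransversalThrough π s b) (ht : IsTransversalThrough π t b)
    {g : R → M} (hg : ∀ w w', π w = π w' → π w ≠ 0 → g w = g w') :
    ∑ i, g (s i) = ∑ k, g (t k) := by
  let E : ι ≃ κ := (Equiv.ofBijective _ hs.bijective).trans (Equiv.ofBijective _ ht.bijective).symm
  have hE (i : ι) : π (t (E i)) = π (s i) :=
    (Equiv.ofBijective _ ht.bijective).apply_symm_apply (π (s i))
  refine Fintype.sum_equiv E _ _ fun i => ?_
  by_cases hi : π (s i) = 0
  · rw [hs.eq_of_map_eq_zero hi, ht.eq_of_map_eq_zero ((hE i).trans hi)]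
  · exact hg _ _ (hE i).symm hi

theorem sum_sum_eq [Fintype ι₁] [Fintype κ₁] [Fintype ι₂] [Fintype κ₂] [AddCommMonoid M]
    [Zero Q₁] [Zero Q₂] {π₁ : R₁ → Q₁} {π₂ : R₂ → Q₂} {s₁ : ι₁ → R₁} {t₁ : κ₁ → R₁}
    {s₂ : ι₂ → R₂} {t₂ : κ₂ → R₂} {b₁ : R₁} {b₂ : R₂}
    (hs₁ : IsTransversalThrough π₁ s₁ b₁) (ht₁ : IsTransversalThrough π₁ t₁ b₁)
    (hs₂ : IsTransversalThrough π₂ s₂ b₂) (ht₂ : IsTransversalThrough π₂ t₂ b₂) {f : R₁ → R₂ → M}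
    (hf₁ : ∀ w w' y, π₁ w = π₁ w' → π₁ w ≠ 0 → f w y = f w' y)
    (hf₂ : ∀ x w w', π₂ w = π₂ w' → π₂ w ≠ 0 → f x w = f x w') :
    ∑ i, ∑ j, f (s₁ i) (s₂ j) = ∑ i, ∑ j, f (t₁ i) (t₂ j) :=
  calc
    _ = ∑ i, ∑ j, f (t₁ i) (s₂ j) := hs₁.sum_eq ht₁ fun w w' h h₀ =>
      Finset.sum_congr rfl fun j _ => hf₁ w w' (s₂ j) h h₀
    _ = _ := Finset.sum_congr rfl fun i _ => hs₂.sum_eq ht₂ (hf₂ (t₁ i))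

theorem units_smul [Semiring R] [Semiring Q] {π : R →+* Q} {s : ι → R} {b : R}
    (hs : IsTransversalThrough π s b) (u : Rˣ) :
    IsTransversalThrough π (fun i => u • s i) (u • b) where
  bijective := by
    have : π ∘ (fun i => u • s i) = (Units.map (π : R →* Q) u • ·) ∘ π ∘ s := by
      ext i
      simp [Units.smul_def]
    rw [this]
    exact (MulAction.bijective (Units.map (π : R →* Q) u)).comp hs.bijective
  mem_range := by
    obtain ⟨i, rfl⟩ := hs.mem_range
    exact ⟨i, rfl⟩
  map_eq_zero := by rw [Units.smul_def, smul_eq_mul, map_mul, hs.map_eq_zero, mul_zero]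

end IsTransversalThrough

end Transversal

theorem exists_units_sq_eq_of_natCast_dvd_sub_one {R : Type*} [CommRing R] {r k : ℕ} (hr : Odd r)
    (hnil : (r : R) ^ k = 0) {u : R} (hu : (r : R) ∣ u - 1) : ∃ v : Rˣ, ((v ^ 2 : Rˣ) : R) = u := by
  have hpow : u ^ r ^ k = 1 := by
    have := dvd_sub_pow_of_dvd_sub hu k
    rwa [pow_succ, hnil, zero_mul, zero_dvd_iff, one_pow, sub_eq_zero] at this
  obtain ⟨U, rfl⟩ : IsUnit u := .of_pow_eq_one hpow (pow_ne_zero _ hr.pos.ne')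
  have hord : orderOf U ∣ r ^ k := orderOf_dvd_of_pow_eq_one (Units.ext hpow)
  obtain ⟨l, hl⟩ := exists_pow_eq_self_of_coprime
    (Nat.Coprime.coprime_dvd_right hord (Nat.coprime_two_left.2 hr.pow))
  exact ⟨U ^ l, by rw [pow_right_comm, hl]⟩

section PrimePower

variable {r k : ℕ}

/-- The reduction `ℤ/r^(k+1) → ℤ/r^k`; writing the source as `r^(k+1)` avoids the truncated
exponent `k - 1`. -/
def reducePow (r k : ℕ) : ZMod (r ^ (k + 1)) →+* ZMod (r ^ k) :=
  ZMod.castHom (pow_dvd_pow r k.le_succ) _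

theorem reducePow_natCast_eq_zero_iff {a : ℕ} : reducePow r k a = 0 ↔ r ^ k ∣ a := by
  rw [map_natCast, ZMod.natCast_eq_zero_iff]

theorem bijective_reducePow_progression {c : ℕ} [NeZero r] (hc : c.Coprime r)
    (x : ZMod (r ^ (k + 1))) :
    Function.Bijective fun i : Fin (r ^ k) => reducePow r k (x + c * (i : ℕ)) := by
  rw [Fintype.bijective_iff_injective_and_card]
  refine ⟨fun i j hij => ?_, by rw [Fintype.card_fin, ZMod.card]⟩
  simp only [map_add, map_mul, map_natCast] at hij
  have hunit : IsUnit (c : ZMod (r ^ k)) := (ZMod.isUnit_iff_coprime _ _).2 (hc.pow_right k)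
  have hmod := hunit.mul_left_cancel (add_left_cancel hij)
  rw [ZMod.natCast_eq_natCast_iff', Nat.mod_eq_of_lt i.2, Nat.mod_eq_of_lt j.2] at hmod
  exact Fin.ext hmod

theorem exists_isTransversalThrough_progression {c : ℕ} [NeZero r] (hc : c.Coprime r)
    (x : ZMod (r ^ (k + 1))) :
    ∃ b, IsTransversalThrough (reducePow r k) (fun i : Fin (r ^ k) => x + c * (i : ℕ)) b := by
  have hbij := bijective_reducePow_progression (k := k) hc x
  obtain ⟨i, hi⟩ := hbij.surjective 0
  exact ⟨_, hbij, ⟨i, rfl⟩, hi⟩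

theorem isTransversalThrough_progression_self {c : ℕ} [NeZero r] (hc : c.Coprime r)
    {b : ZMod (r ^ (k + 1))} (hb : reducePow r k b = 0) :
    IsTransversalThrough (reducePow r k) (fun i : Fin (r ^ k) => b + c * (i : ℕ)) b :=
  ⟨bijective_reducePow_progression hc b, ⟨0, by simp⟩, hb⟩

theorem reducePow_eq_zero_iff_dvd [NeZero r] {b : ZMod (r ^ (k + 1))} :
    reducePow r k b = 0 ↔ (r : ZMod (r ^ (k + 1))) ^ k ∣ b := by
  constructor
  · obtain ⟨b, rfl⟩ := ZMod.natCast_zmod_surjective b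
    rw [reducePow_natCast_eq_zero_iff]
    exact fun h => by exact_mod_cast Nat.cast_dvd_cast h
  · rintro ⟨z, rfl⟩
    rw [map_mul, ← Nat.cast_pow, reducePow_natCast_eq_zero_iff.2 dvd_rfl, zero_mul]

theorem exists_eq_natCast_pow_mul_unit (hr : r.Prime) (w : ZMod (r ^ k)) :
    ∃ i, ∃ u : (ZMod (r ^ k))ˣ, w = (r : ZMod (r ^ k)) ^ i * u := by
  have : NeZero (r ^ k) := ⟨pow_ne_zero _ hr.ne_zero⟩
  obtain ⟨W, rfl⟩ := ZMod.natCast_zmod_surjective w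
  rcases eq_or_ne W 0 with rfl | hW
  · refine ⟨k, 1, ?_⟩
    rw [← Nat.cast_pow, ZMod.natCast_self, zero_mul, Nat.cast_zero]
  · obtain ⟨i, c, hc, rfl⟩ := Nat.exists_eq_pow_mul_and_not_dvd hW r hr.ne_one
    have hcop : c.Coprime (r ^ k) := ((hr.coprime_iff_not_dvd.2 hc).pow_left k).symm
    exact ⟨i, ZMod.unitOfCoprime c hcop, by simp⟩

theorem zmod_natCast_pow_self : (r : ZMod (r ^ k)) ^ k = 0 := by
  rw [← Nat.cast_pow, ZMod.natCast_self]

theorem setOf_reducePow_eq_zero (hr : r.Prime) :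
    {b | reducePow r k b = 0} = insert 0
      (MulAction.orbit (ZMod (r ^ (k + 1)))ˣ ((r : ZMod (r ^ (k + 1))) ^ k)) := by
  have : NeZero r := ⟨hr.ne_zero⟩
  ext b
  simp only [Set.mem_ofPred_eq, reducePow_eq_zero_iff_dvd]
  constructor
  · rintro ⟨z, rfl⟩
    obtain ⟨i, u, rfl⟩ := exists_eq_natCast_pow_mul_unit hr z
    rcases i with - | i
    · exact .inr ⟨u, by simp [Units.smul_def, mul_comm]⟩
    · left
      rw [← mul_assoc, ← pow_add, pow_eq_zero_of_le (by omega) zmod_natCast_pow_self, zero_mul]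
  · rintro (rfl | ⟨u, rfl⟩)
    · exact dvd_zero _
    · exact Dvd.intro_left _ rfl

theorem natCast_mul_dvd_pow_of_reducePow_ne_zero (hr : r.Prime) {w : ZMod (r ^ (k + 1))}
    (hw : reducePow r k w ≠ 0) : r * w ∣ (r : ZMod (r ^ (k + 1))) ^ k := by
  have : NeZero r := ⟨hr.ne_zero⟩
  obtain ⟨i, u, rfl⟩ := exists_eq_natCast_pow_mul_unit hr w
  have hik : i < k := by
    by_contra! hki
    exact hw (reducePow_eq_zero_iff_dvd.2 (dvd_mul_of_dvd_left (pow_dvd_pow _ hki) _))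
  rw [← mul_assoc, ← pow_succ', Units.mul_right_dvd]
  exact pow_dvd_pow _ hik

theorem exists_units_sq_smul_eq_of_reducePow_eq (hr : r.Prime) (hr' : Odd r)
    {w w' : ZMod (r ^ (k + 1))} (h : reducePow r k w = reducePow r k w')
    (h₀ : reducePow r k w ≠ 0) : ∃ v : (ZMod (r ^ (k + 1)))ˣ, w' = v ^ 2 • w := by
  have : NeZero r := ⟨hr.ne_zero⟩
  have hdvd : (r : ZMod (r ^ (k + 1))) ^ k ∣ w' - w :=
    reducePow_eq_zero_iff_dvd.1 (by rw [map_sub, h, sub_self])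
  obtain ⟨t, ht⟩ := (natCast_mul_dvd_pow_of_reducePow_ne_zero hr h₀).trans hdvd
  obtain ⟨v, hv⟩ := exists_units_sq_eq_of_natCast_dvd_sub_one hr' zmod_natCast_pow_self
    (u := 1 + (r : ZMod (r ^ (k + 1))) * t) ⟨t, add_sub_cancel_left 1 _⟩
  refine ⟨v, ?_⟩
  rw [Units.smul_def, hv, smul_eq_mul]
  linear_combination ht

end PrimePower

section ProgressionSum

variable {M : Type*} [AddCommMonoid M] {r₁ r₂ k₁ k₂ c₁ c₂ : ℕ}
  {f : ZMod (r₁ ^ (k₁ + 1)) → ZMod (r₂ ^ (k₂ + 1)) → M}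
  {H : Subgroup ((ZMod (r₁ ^ (k₁ + 1)))ˣ × (ZMod (r₂ ^ (k₂ + 1)))ˣ)}

/-- The sum of `f` over the box with corner `(x, y)`, steps `c₁`, `c₂` and side lengths `r₁^k₁`,
`r₂^k₂`; for `f` a Gauss period these are the character sums over the `γ^a D`. -/
def progressionSum (c₁ c₂ : ℕ) (f : ZMod (r₁ ^ (k₁ + 1)) → ZMod (r₂ ^ (k₂ + 1)) → M)
    (x : ZMod (r₁ ^ (k₁ + 1))) (y : ZMod (r₂ ^ (k₂ + 1))) : M :=
  ∑ i : Fin (r₁ ^ k₁), ∑ j : Fin (r₂ ^ k₂), f (x + c₁ * (i : ℕ)) (y + c₂ * (j : ℕ))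

theorem progressionSum_eq_of_isTransversalThrough (hr₁ : r₁.Prime) (hr₂ : r₂.Prime)
    (hodd₁ : Odd r₁) (hodd₂ : Odd r₂) (hH : H.index = 2)
    (hf : ∀ h ∈ H, ∀ x y, f (h.1 • x) (h.2 • y) = f x y) {h} (hh : h ∈ H)
    {x x' b₁ : ZMod (r₁ ^ (k₁ + 1))} {y y' b₂ : ZMod (r₂ ^ (k₂ + 1))}
    (hx : IsTransversalThrough (reducePow r₁ k₁) (fun i : Fin (r₁ ^ k₁) => x + c₁ * (i : ℕ)) b₁)
    (hy : IsTransversalThrough (reducePow r₂ k₂) (fun j : Fin (r₂ ^ k₂) => y + c₂ * (j : ℕ)) b₂)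
    (hx' : IsTransversalThrough (reducePow r₁ k₁)
      (fun i : Fin (r₁ ^ k₁) => x' + c₁ * (i : ℕ)) (h.1 • b₁))
    (hy' : IsTransversalThrough (reducePow r₂ k₂)
      (fun j : Fin (r₂ ^ k₂) => y' + c₂ * (j : ℕ)) (h.2 • b₂)) :
    progressionSum c₁ c₂ f x' y' = progressionSum c₁ c₂ f x y := by
  have hf₁ w w' y (hw : reducePow r₁ k₁ w = reducePow r₁ k₁ w') (hw₀ : reducePow r₁ k₁ w ≠ 0) :
      f w y = f w' y := by
    obtain ⟨v, rfl⟩ := exists_units_sq_smul_eq_of_reducePow_eq hr₁ hodd₁ hw hw₀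
    simpa using (hf _ (Subgroup.sq_mem_of_index_two hH (v, 1)) w y).symm
  have hf₂ x w w' (hw : reducePow r₂ k₂ w = reducePow r₂ k₂ w') (hw₀ : reducePow r₂ k₂ w ≠ 0) :
      f x w = f x w' := by
    obtain ⟨v, rfl⟩ := exists_units_sq_smul_eq_of_reducePow_eq hr₂ hodd₂ hw hw₀
    simpa using (hf _ (Subgroup.sq_mem_of_index_two hH (1, v)) x w).symm
  calc
    progressionSum c₁ c₂ f x' y'
    _ = ∑ i : Fin (r₁ ^ k₁), ∑ j : Fin (r₂ ^ k₂),
          f (h.1 • (x + c₁ * (i : ℕ))) (h.2 • (y + c₂ * (j : ℕ))) :=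
      hx'.sum_sum_eq (hx.units_smul h.1) hy' (hy.units_smul h.2) hf₁ hf₂
    _ = progressionSum c₁ c₂ f x y := by simp only [hf h hh, progressionSum]

theorem encard_range_progressionSum_le_five (hr₁ : r₁.Prime) (hr₂ : r₂.Prime)
    (hodd₁ : Odd r₁) (hodd₂ : Odd r₂) (hc₁ : c₁.Coprime r₁) (hc₂ : c₂.Coprime r₂)
    (hH : H.index = 2) (hfst : ∀ u, ∃ v, (u, v) ∈ H) (hsnd : ∀ v, ∃ u, (u, v) ∈ H)
    (hf : ∀ h ∈ H, ∀ x y, f (h.1 • x) (h.2 • y) = f x y) :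
    (Set.range (progressionSum c₁ c₂ f).uncurry).encard ≤ 5 := by
  have : NeZero r₁ := ⟨hr₁.ne_zero⟩
  have : NeZero r₂ := ⟨hr₂.ne_zero⟩
  have hsub : Set.range (progressionSum c₁ c₂ f).uncurry ⊆
      Set.image2 (progressionSum c₁ c₂ f) {b | reducePow r₁ k₁ b = 0}
        {b | reducePow r₂ k₂ b = 0} := by
    rintro _ ⟨⟨x, y⟩, rfl⟩
    obtain ⟨b₁, hx⟩ := exists_isTransversalThrough_progression hc₁ x
    obtain ⟨b₂, hy⟩ := exists_isTransversalThrough_progression hc₂ y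
    refine ⟨b₁, hx.map_eq_zero, b₂, hy.map_eq_zero, ?_⟩
    apply progressionSum_eq_of_isTransversalThrough hr₁ hr₂ hodd₁ hodd₂ hH hf H.one_mem hx hy
    · simpa using isTransversalThrough_progression_self hc₁ hx.map_eq_zero
    · simpa using isTransversalThrough_progression_self hc₂ hy.map_eq_zero
  refine (Set.encard_le_encard hsub).trans ?_
  rw [setOf_reducePow_eq_zero hr₁, setOf_reducePow_eq_zero hr₂]
  refine encard_image2_insert_orbit_le_five hH hfst hsnd smul_zero smul_zero ?_
  simp only [← setOf_reducePow_eq_zero hr₁, ← setOf_reducePow_eq_zero hr₂]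
  intro h hh b₁ hb₁ b₂ hb₂
  have ht₁ := isTransversalThrough_progression_self hc₁ hb₁
  have ht₂ := isTransversalThrough_progression_self hc₂ hb₂
  exact progressionSum_eq_of_isTransversalThrough hr₁ hr₂ hodd₁ hodd₂ hH hf hh ht₁ ht₂
    (isTransversalThrough_progression_self hc₁ (ht₁.units_smul h.1).map_eq_zero)
    (isTransversalThrough_progression_self hc₂ (ht₂.units_smul h.2).map_eq_zero)

end ProgressionSum

section GaussPeriod

variable {F M : Type*} [Field F] [AddCommMonoid M] {γ : Fˣ} {N p : ℕ} {g : F → M}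

theorem cycClass_congr {i j : ℕ} (h : (i : ZMod N) = j) : cycClass γ N i = cycClass γ N j := by
  suffices hsub : ∀ {i j : ℕ}, (i : ZMod N) = j → cycClass γ N i ⊆ cycClass γ N j from
    (hsub h).antisymm (hsub h.symm)
  rintro i j h _ ⟨k, rfl⟩
  obtain ⟨l, hl⟩ := (ZMod.intCast_eq_intCast_iff_dvd_sub j i N).1 (by exact_mod_cast h.symm)
  exact ⟨l + k, by rw [mul_add, ← hl]; congr 2; ring⟩

theorem disjoint_cycClass (hN : N ∣ orderOf γ) {i j : ℕ} (h : (i : ZMod N) ≠ j) :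
    Disjoint (cycClass γ N i) (cycClass γ N j) := by
  rw [Set.disjoint_left]
  rintro _ ⟨k, rfl⟩ ⟨l, hkl⟩
  apply h
  have hmod := zpow_eq_zpow_iff_modEq.1 (Units.ext hkl)
  simpa using (ZMod.intCast_eq_intCast_iff _ _ N).2 (hmod.of_dvd (Int.natCast_dvd_natCast.2 hN))

theorem image_mul_cycClass (a i : ℕ) :
    (fun x => (γ : F) ^ a * x) '' cycClass γ N i = cycClass γ N (a + i) := by
  have hshift (k : ℤ) : (γ : F) ^ a * ((γ ^ ((i : ℤ) + N * k) : Fˣ) : F) =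
      ((γ ^ (((a + i : ℕ) : ℤ) + N * k) : Fˣ) : F) := by
    rw [← Units.val_pow_eq_pow_val, ← Units.val_mul, ← zpow_natCast, ← zpow_add, Nat.cast_add,
      add_assoc]
  ext x
  constructor
  · rintro ⟨_, ⟨k, rfl⟩, rfl⟩
    exact ⟨k, hshift k⟩
  · rintro ⟨k, rfl⟩
    exact ⟨_, ⟨k, rfl⟩, hshift k⟩

theorem image_pow_cycClass (hp : p.Coprime (orderOf γ)) (i : ℕ) :
    (· ^ p) '' cycClass γ N i = cycClass γ N (p * i) := by
  have hpow (k : ℤ) : ((γ ^ ((i : ℤ) + N * k) : Fˣ) : F) ^ p =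
      ((γ ^ (((p * i : ℕ) : ℤ) + N * (p * k)) : Fˣ) : F) := by
    rw [← Units.val_pow_eq_pow_val, ← zpow_natCast, ← zpow_mul]
    congr 2
    push_cast
    ring
  ext x
  constructor
  · rintro ⟨_, ⟨k, rfl⟩, rfl⟩
    exact ⟨p * k, hpow k⟩
  · rintro ⟨k, rfl⟩
    obtain ⟨l, hl⟩ := exists_pow_eq_self_of_coprime hp
    have hroot : γ ^ ((N : ℤ) * (p * (l * k))) = γ ^ ((N : ℤ) * k) := by
      rw [show (N : ℤ) * (p * (l * k)) = p * (l * (N * k)) by ring, zpow_mul, zpow_natCast,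
        zpow_mul, zpow_natCast, hl]
    exact ⟨_, ⟨l * k, rfl⟩, (hpow _).trans (by rw [zpow_add, zpow_add, hroot])⟩

/-- The Gauss period `∑ g(x)`, `x ∈ C_k`, of an arbitrary function `g` in place of an additive
character. It is indexed by the residue of `k` modulo `N`, on which alone the class `C_k` depends;
for `N = 0` the index is the absolute value of an integer. -/
noncomputable def gaussPeriod (g : F → M) (γ : Fˣ) (N : ℕ) (k : ZMod N) : M :=
  ∑ᶠ x ∈ cycClass γ N k.val, g x

theorem gaussPeriod_natCast [NeZero N] (i : ℕ) :
    gaussPeriod g γ N i = ∑ᶠ x ∈ cycClass γ N i, g x := by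
  rw [gaussPeriod, cycClass_congr (ZMod.natCast_zmod_val _)]

theorem finsum_mem_cycClass_mul [NeZero N] (a i : ℕ) :
    ∑ᶠ x ∈ cycClass γ N i, g ((γ : F) ^ a * x) = gaussPeriod g γ N (a + i : ℕ) := by
  rw [gaussPeriod_natCast, ← image_mul_cycClass, finsum_mem_image]
  exact (mul_right_injective₀ (pow_ne_zero a γ.ne_zero)).injOn

theorem finsum_mem_iUnion_cycClass_mul [Finite F] [NeZero N] (hN : N ∣ orderOf γ) {ι : Type*}
    [Fintype ι] {s : ι → ℕ} (hs : Function.Injective fun t => (s t : ZMod N)) (a : ℕ) :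
    ∑ᶠ x ∈ ⋃ t, cycClass γ N (s t), g ((γ : F) ^ a * x) =
      ∑ t, gaussPeriod g γ N (a + s t : ℕ) := by
  rw [finsum_mem_iUnion (fun t t' htt => disjoint_cycClass hN (hs.ne htt)) fun _ => Set.toFinite _,
    finsum_eq_sum_of_fintype]
  exact Finset.sum_congr rfl fun t _ => finsum_mem_cycClass_mul a (s t)

variable [Finite F] [CharP F p]

theorem coprime_orderOf_units (hp : p.Prime) (u : Fˣ) : p.Coprime (orderOf u) := by
  have : ExpChar F p := .prime hp
  refine hp.coprime_iff_not_dvd.2 fun ⟨d, hd⟩ => ?_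
  have hu : u ^ d = 1 := by
    have h := pow_orderOf_eq_one (u : F)
    rw [orderOf_units, hd, ← pow_one p, ExpChar.pow_prime_pow_mul_eq_one_iff] at h
    exact Units.ext h
  have hpos := orderOf_pos u
  have hle := orderOf_le_of_pow_eq_one (by by_contra! h; simp_all) hu
  nlinarith [hp.two_le]

theorem gaussPeriod_natCast_mul [NeZero N] (hp : p.Prime) (hg : ∀ x, g (x ^ p) = g x)
    (k : ZMod N) : gaussPeriod g γ N (p * k) = gaussPeriod g γ N k := by
  have : Fact p.Prime := ⟨hp⟩
  obtain ⟨i, rfl⟩ := ZMod.natCast_zmod_surjective k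
  rw [← Nat.cast_mul, gaussPeriod_natCast, gaussPeriod_natCast,
    ← image_pow_cycClass (coprime_orderOf_units hp γ)]
  exact (finsum_mem_image (frobenius_inj F p).injOn).trans (finsum_mem_congr rfl fun x _ => hg x)

end GaussPeriod

theorem psi_pow {p : ℕ} [Fact p.Prime] {F : Type*} [Field F] [Fintype F] [Algebra (ZMod p) F]
    (x : F) : psi p (x ^ p) = psi p x := by
  have hfrob := Algebra.trace_eq_of_algEquiv
    (FiniteField.frobeniusAlgEquivOfAlgebraic (ZMod p) F) x
  rw [FiniteField.coe_frobeniusAlgEquivOfAlgebraic, ZMod.card] at hfrob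
  rw [psi, psi, hfrob]

theorem dvd_orderOf_of_card_eq_pow_orderOf {F : Type*} [Field F] [Fintype F] {p N : ℕ}
    (hF : Fintype.card F = p ^ orderOf (p : ZMod N)) {γ : Fˣ}
    (hγ : ∀ x, x ∈ Subgroup.zpowers γ) : N ∣ orderOf γ := by
  rw [orderOf_eq_card_of_forall_mem_zpowers hγ, Nat.card_units, Nat.card_eq_fintype_card,
    ← ZMod.natCast_eq_zero_iff, Nat.cast_sub Fintype.card_pos, hF, Nat.cast_pow, pow_orderOf_eq_one,
    Nat.cast_one, sub_self]

theorem iUnion_lt_iUnion_lt {α : Type*} {a b : ℕ} (S : ℕ → ℕ → Set α) :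
    ⋃ i < a, ⋃ j < b, S i j = ⋃ t : Fin a × Fin b, S t.1 t.2 := by
  ext x
  simp only [Set.mem_iUnion, Prod.exists, Fin.exists_iff, exists_prop]

section ChineseRemainder

variable {M : Type*} {a b p : ℕ}

/-- Transport of a function on `ℤ/ab` along the Chinese remainder isomorphism. -/
def crtCurry (hab : a.Coprime b) (g : ZMod (a * b) → M) (x : ZMod a) (y : ZMod b) : M :=
  g ((ZMod.chineseRemainder hab).symm (x, y))

theorem crtCurry_natCast_mul (hab : a.Coprime b) {g : ZMod (a * b) → M}
    (hg : ∀ k, g (p * k) = g k) (x : ZMod a) (y : ZMod b) :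
    crtCurry hab g (p * x) (p * y) = crtCurry hab g x y := by
  have hmul : (ZMod.chineseRemainder hab).symm (p * x, p * y) =
      p * (ZMod.chineseRemainder hab).symm (x, y) := by
    simp [RingEquiv.symm_apply_eq, Prod.ext_iff]
  rw [crtCurry, hmul, hg, crtCurry]

theorem crtCurry_add_mul (hab : a.Coprime b) (g : ZMod (a * b) → M) (x i j : ℕ) :
    crtCurry hab g (x + b * i) (x + a * j) = g (x + (b * i + a * j) : ℕ) := by
  rw [crtCurry]
  congr 1
  rw [RingEquiv.symm_apply_eq]
  ext <;> simp

theorem injective_natCast_mul_add_mul (hab : a.Coprime b) {s t : ℕ} (hs : s ≤ a) (ht : t ≤ b) :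
    Function.Injective fun x : Fin s × Fin t => ((b * x.1 + a * x.2 : ℕ) : ZMod (a * b)) := by
  rintro ⟨i, j⟩ ⟨i', j'⟩ h
  have hmod := (ZMod.natCast_eq_natCast_iff _ _ _).1 h
  have hi : i.1 ≡ i' [MOD a] := Nat.ModEq.cancel_left_of_coprime hab (by
    simpa [Nat.ModEq] using hmod.of_mul_right b)
  have hj : j.1 ≡ j' [MOD b] := Nat.ModEq.cancel_left_of_coprime hab.symm (by
    simpa [Nat.ModEq] using hmod.of_mul_left a)
  exact Prod.ext (Fin.ext (hi.eq_of_lt_of_lt (i.2.trans_le hs) (i'.2.trans_le hs)))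
    (Fin.ext (hj.eq_of_lt_of_lt (j.2.trans_le ht) (j'.2.trans_le ht)))

theorem index_zpowers_eq_two (hab : a.Coprime b) [NeZero a] [NeZero b] {u : (ZMod a)ˣ}
    {v : (ZMod b)ˣ} (hu : (u : ZMod a) = p) (hv : (v : ZMod b) = p)
    (hp : 2 * orderOf (p : ZMod (a * b)) = (a * b).totient) :
    (Subgroup.zpowers (u, v)).index = 2 := by
  have horder : orderOf (u, v) = orderOf (p : ZMod (a * b)) := by
    rw [← (ZMod.chineseRemainder hab).toMulEquiv.orderOf_eq, Prod.orderOf, ← orderOf_units,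
      ← orderOf_units, hu, hv, Prod.orderOf]
    simp
  have hcard : Nat.card ((ZMod a)ˣ × (ZMod b)ˣ) = (a * b).totient := by
    rw [Nat.card_prod, Nat.card_eq_fintype_card, Nat.card_eq_fintype_card,
      ZMod.card_units_eq_totient, ZMod.card_units_eq_totient, Nat.totient_mul hab]
  refine Nat.eq_of_mul_eq_mul_right (orderOf_pos (u, v)) ?_
  rw [index_zpowers_mul_orderOf, hcard, ← hp, horder]

end ChineseRemainder

theorem exists_unit_zpowers_eq_top {a p : ℕ} [NeZero a]
    (hp : orderOf (p : ZMod a) = a.totient) :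
    ∃ u : (ZMod a)ˣ, (u : ZMod a) = p ∧ Subgroup.zpowers u = ⊤ := by
  have hpos : orderOf (p : ZMod a) ≠ 0 := hp ▸ (Nat.totient_pos.2 (NeZero.pos a)).ne'
  obtain ⟨u, hu⟩ := IsUnit.of_pow_eq_one (pow_orderOf_eq_one (p : ZMod a)) hpos
  refine ⟨u, hu, zpowers_eq_top_of_orderOf_eq_card ?_⟩
  rw [← orderOf_units, hu, hp, Nat.card_eq_fintype_card, ZMod.card_units_eq_totient]

theorem finsum_mem_iUnion_cycClass_eq_progressionSum {F M : Type*} [Field F] [Finite F]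
    [AddCommMonoid M] {r₁ r₂ k₁ k₂ : ℕ} [NeZero r₁] [NeZero r₂]
    (hcop : (r₁ ^ (k₁ + 1)).Coprime (r₂ ^ (k₂ + 1))) {γ : Fˣ}
    (hγ : r₁ ^ (k₁ + 1) * r₂ ^ (k₂ + 1) ∣ orderOf γ) (g : F → M) (a : ℕ) :
    ∑ᶠ x ∈ ⋃ i < r₁ ^ k₁, ⋃ j < r₂ ^ k₂,
      cycClass γ (r₁ ^ (k₁ + 1) * r₂ ^ (k₂ + 1)) (r₂ ^ (k₂ + 1) * i + r₁ ^ (k₁ + 1) * j),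
        g ((γ : F) ^ a * x) =
      progressionSum (r₂ ^ (k₂ + 1)) (r₁ ^ (k₁ + 1))
        (crtCurry hcop (gaussPeriod g γ (r₁ ^ (k₁ + 1) * r₂ ^ (k₂ + 1)))) a a := by
  have hinj := injective_natCast_mul_add_mul hcop
    (Nat.pow_le_pow_right (NeZero.pos r₁) k₁.le_succ)
    (Nat.pow_le_pow_right (NeZero.pos r₂) k₂.le_succ)
  rw [iUnion_lt_iUnion_lt, finsum_mem_iUnion_cycClass_mul hγ hinj, Fintype.sum_prod_type]
  simp only [progressionSum, crtCurry_add_mul]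

theorem statement_12_general {p₁ p₂ m n N p : ℕ} (hp₁ : p₁.Prime) (hp₂ : p₂.Prime)
    (hodd₁ : Odd p₁) (hodd₂ : Odd p₂) (hne : p₁ ≠ p₂) (hm : 1 ≤ m) (hn : 1 ≤ n)
    (hN : N = p₁ ^ m * p₂ ^ n) (hp : p.Prime)
    (hord₁ : orderOf (p : ZMod (p₁ ^ m)) = (p₁ ^ m).totient)
    (hord₂ : orderOf (p : ZMod (p₂ ^ n)) = (p₂ ^ n).totient)
    (hord : 2 * orderOf (p : ZMod N) = N.totient)
    {F M : Type*} [Field F] [Finite F] [CharP F p] [AddCommMonoid M] {γ : Fˣ} (hγ : N ∣ orderOf γ)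
    {D : Set F} (hD : D = ⋃ i < p₁ ^ (m - 1), ⋃ j < p₂ ^ (n - 1),
      cycClass γ N (p₂ ^ n * i + p₁ ^ m * j))
    {g : F → M} (hg : ∀ x, g (x ^ p) = g x) :
    (Set.range fun a : ℕ => ∑ᶠ x ∈ D, g ((γ : F) ^ a * x)).encard ≤ 5 := by
  subst hN hD
  obtain ⟨m, rfl⟩ := Nat.exists_eq_add_of_le' hm
  obtain ⟨n, rfl⟩ := Nat.exists_eq_add_of_le' hn
  have : NeZero p₁ := ⟨hp₁.ne_zero⟩
  have : NeZero p₂ := ⟨hp₂.ne_zero⟩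
  have hcop : p₁.Coprime p₂ := (Nat.coprime_primes hp₁ hp₂).2 hne
  have hab : (p₁ ^ (m + 1)).Coprime (p₂ ^ (n + 1)) := hcop.pow _ _
  obtain ⟨u, hu, hu_top⟩ := exists_unit_zpowers_eq_top hord₁
  obtain ⟨v, hv, hv_top⟩ := exists_unit_zpowers_eq_top hord₂
  have hinv (x y) := crtCurry_natCast_mul hab (gaussPeriod_natCast_mul (γ := γ) hp hg) x y
  simp only [← hu, ← hv, ← smul_eq_mul, ← Units.smul_def] at hinv
  have hle := encard_range_progressionSum_le_five hp₁ hp₂ hodd₁ hodd₂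
    (hcop.symm.pow_left (n + 1)) (hcop.pow_left (m + 1)) (index_zpowers_eq_two hab hu hv hord)
    (exists_mk_mem_zpowers_of_zpowers_fst_eq_top hu_top v)
    (exists_mk_mem_zpowers_of_zpowers_snd_eq_top u hv_top)
    fun h hh => apply_smul_smul_of_mem_zpowers (g := (u, v)) hinv hh
  refine (Set.encard_le_encard ?_).trans hle
  rintro _ ⟨a, rfl⟩
  exact ⟨(a, a), (finsum_mem_iUnion_cycClass_eq_progressionSum hab hγ g a).symm⟩

/-- Theorem 3.2 of the paper: the set `{ψ(γ^a D) : a = 0, …, q-2}` has at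
most five elements. -/
theorem statement_12 (p₁ p₂ m n : ℕ) (hp₁ : p₁.Prime) (hp₂ : p₂.Prime)
    (hp₁mod : p₁ % 4 = 1) (hp₂mod : p₂ % 4 = 3) (hm : 1 ≤ m) (hn : 1 ≤ n)
    (N : ℕ) (hN : N = p₁ ^ m * p₂ ^ n)
    (p : ℕ) (hp : p.Prime)
    (hord₁ : orderOf ((p : ZMod (p₁ ^ m))) = Nat.totient (p₁ ^ m))
    (hord₂ : orderOf ((p : ZMod (p₂ ^ n))) = Nat.totient (p₂ ^ n))
    (f : ℕ) (hf : f = orderOf ((p : ZMod N))) (hford : 2 * f = Nat.totient N)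
    (F : Type*) [Field F] [Fintype F] [Algebra (ZMod p) F]
    (hcard : Fintype.card F = p ^ f)
    (γ : Fˣ) (hγ : ∀ x : Fˣ, x ∈ Subgroup.zpowers γ)
    (D : Set F)
    (hD : D = ⋃ i < p₁ ^ (m - 1), ⋃ j < p₂ ^ (n - 1),
      cycClass γ N (p₂ ^ n * i + p₁ ^ m * j)) :
    Set.ncard
      {z : ℂ | ∃ a : ℕ, a < p ^ f - 1 ∧ z = ∑ᶠ x ∈ D, psi p ((γ : F) ^ a * x)} ≤ 5 := by
  have : Fact p.Prime := ⟨hp⟩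
  have : CharP F p := charP_of_injective_algebraMap (algebraMap (ZMod p) F).injective p
  have hle := statement_12_general hp₁ hp₂ (Nat.odd_iff.2 (by omega)) (Nat.odd_iff.2 (by omega))
    (by rintro rfl; omega) hm hn hN hp hord₁ hord₂ (hf ▸ hford)
    (dvd_orderOf_of_card_eq_pow_orderOf (hf ▸ hcard) hγ) hD psi_pow
  refine ENat.toNat_le_of_le_natCast ((Set.encard_le_encard ?_).trans hle)
  exact fun _ ⟨a, _, h⟩ => ⟨a, h.symm⟩
end

section
/- Let q = 2^{12} and N = 45. For any primitive element γ of F_q, let C_i = γ^i⟨γ^{45}⟩ (0 ≤ i ≤ 44) be the cyclotomic classes of order 45 of F_q, and let D = C₀ ∪ C₅ ∪ C₁₀. Then the Cayley graph Cay(F_q, D) is a strongly regular graph. -/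
open scoped Classical

/-- The Cayley graph on the additive group `G` with connection set `D`. -/
def cayley {G : Type*} [AddGroup G] (D : Set G) : SimpleGraph G :=
  SimpleGraph.fromRel fun x y => x - y ∈ D

/-!
By Fourier inversion the graph is strongly regular as soon as the nontrivial additive characters
take only two values on `D`. With `ζ = γ ^ 455` of order `9`, `D` is the set of all `x` with
`x ^ 91 ∈ {1, ζ, ζ²}`. It is stable under the units of the subfield of order `8`, so the character
sum attached to `a ≠ 0` is determined by the number `M` of `x ∈ D` for which `a * x` has trace `0`
over that subfield: `273 + 7 ψ(D) = 8 M`.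

Write `a = c * b` with `c ^ 63 = 1` and `b ^ 65 = 1`. For `v ^ 65 = 1` and `T = v + v⁻¹`, the trace
of `c * v` vanishes exactly if `v = 1` or `T ^ 7 = c ^ 56`. Hence `M / 7` is the number of `v` in a
coset of the 13th roots of unity for which `T ^ 7` is one of three ninth roots of unity that
represent the classes modulo cubes, with `v = 1` counted three times if it lies in the coset. The
Frobenius `v ↦ v ^ 16` fixes the coset and fuses the values `ε`, `ε ^ 4`, `ε ^ 16`, the value `1` is
not attained, and an Artin-Schreier argument settles the primitive cube roots of unity: together
they are attained `0` or `4` times, and at most one of them is. This leaves `M = 21` or `M = 49`,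
that is `ψ(D) = -15` or `ψ(D) = 17`.
-/

open Finset Polynomial

section CayleyGraph

variable {G : Type*} [AddCommGroup G] {D : Finset G}

theorem cayley_adj_iff (h0 : 0 ∉ D) (hneg : ∀ x ∈ D, -x ∈ D) {v w : G} :
    (cayley (D : Set G)).Adj v w ↔ w - v ∈ D := by
  have hsymm : v - w ∈ D ↔ w - v ∈ D :=
    ⟨fun h => neg_sub v w ▸ hneg _ h, fun h => neg_sub w v ▸ hneg _ h⟩
  simp only [cayley, SimpleGraph.fromRel_adj, mem_coe, hsymm, or_self, and_iff_right_iff_imp]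
  rintro h rfl
  exact h0 (sub_self v ▸ h)

variable [Fintype G]

theorem degree_cayley (h0 : 0 ∉ D) (hneg : ∀ x ∈ D, -x ∈ D) (v : G) :
    (cayley (D : Set G)).degree v = #D := by
  rw [← SimpleGraph.card_neighborFinset_eq_degree]
  refine card_nbij' (· - v) (· + v) ?_ ?_ ?_ ?_ <;>
    simp [Set.MapsTo, Set.LeftInvOn, cayley_adj_iff h0 hneg]

theorem card_commonNeighbors_cayley (h0 : 0 ∉ D) (hneg : ∀ x ∈ D, -x ∈ D) (v w : G) :
    Fintype.card ((cayley (D : Set G)).commonNeighbors v w) = D.addConvolution D (w - v) := by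
  rw [← Set.toFinset_card]
  refine card_nbij' (fun x => (x - v, w - x)) (fun p => p.1 + v) ?_ ?_ ?_ ?_
  · intro x hx
    simp only [Set.coe_toFinset, SimpleGraph.mem_commonNeighbors, cayley_adj_iff h0 hneg] at hx
    simpa [hx.1] using neg_sub x w ▸ hneg _ hx.2
  · rintro ⟨y, z⟩ h
    simp only [coe_filter, mem_product, Set.mem_ofPred_eq] at h
    obtain ⟨⟨hy, hz⟩, hyz⟩ := h
    obtain rfl : w = y + z + v := eq_add_of_sub_eq hyz.symm
    have hw : y + v - (y + z + v) = -z := by abel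
    simp [SimpleGraph.mem_commonNeighbors, cayley_adj_iff h0 hneg, hy, hw, hneg z hz]
  · intro x _
    exact sub_add_cancel x v
  · rintro ⟨y, z⟩ h
    simp only [coe_filter, mem_product, Set.mem_ofPred_eq] at h
    simp [← h.2, sub_add_eq_sub_sub, sub_right_comm]

theorem sum_addConvolution_mul_addChar (A B : Finset G) (χ : AddChar G ℂ) :
    ∑ x, (A.addConvolution B x : ℂ) * χ x = (∑ a ∈ A, χ a) * ∑ b ∈ B, χ b := by
  calc ∑ x, (A.addConvolution B x : ℂ) * χ x
      = ∑ x, ∑ p ∈ A ×ˢ B with p.1 + p.2 = x, χ (p.1 + p.2) := by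
        refine sum_congr rfl fun x _ => ?_
        rw [sum_congr rfl fun p hp => by rw [(mem_filter.mp hp).2], sum_const, nsmul_eq_mul]
        rfl
    _ = ∑ p ∈ A ×ˢ B, χ p.1 * χ p.2 := by
        rw [sum_fiberwise (A ×ˢ B) (fun p => p.1 + p.2)]
        simp_rw [AddChar.map_add_eq_mul]
    _ = (∑ a ∈ A, χ a) * ∑ b ∈ B, χ b := by rw [sum_mul_sum, sum_product]

theorem card_mul_apply_eq_sum_of_fourier_eq_zero {f : G → ℂ}
    (hf : ∀ χ : AddChar G ℂ, χ ≠ 1 → ∑ x, f x * χ x = 0) (z : G) :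
    Fintype.card G * f z = ∑ x, f x := by
  calc Fintype.card G * f z = ∑ x, f x * ∑ χ : AddChar G ℂ, χ (x - z) := by
        simp [AddChar.sum_apply_eq_ite, sub_eq_zero, mul_comm]
    _ = ∑ χ : AddChar G ℂ, (∑ x, f x * χ x) * χ (-z) := by
        simp_rw [mul_sum, sum_mul, sub_eq_add_neg, AddChar.map_add_eq_mul, mul_assoc]
        exact sum_comm
    _ = ∑ x, f x := by
        rw [sum_eq_single 1 (fun χ _ hχ => by rw [hf χ hχ, zero_mul]) (by simp)]
        simp

theorem isSRGWith_cayley_of_addChar_sum (h0 : 0 ∉ D) (hneg : ∀ x ∈ D, -x ∈ D) {α β : ℤ}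
    (hχ : ∀ χ : AddChar G ℂ, χ ≠ 1 → ∑ d ∈ D, χ d = α ∨ ∑ d ∈ D, χ d = β) {lam mu : ℕ}
    (hlam : lam = mu + α + β) (hmu : (Fintype.card G * mu : ℤ) = (#D - α) * (#D - β)) :
    (cayley (D : Set G)).IsSRGWith (Fintype.card G) #D lam mu := by
  set f : G → ℂ := fun x => D.addConvolution D x - (α + β) * (if x ∈ D then 1 else 0) +
    α * β * (if x = 0 then 1 else 0) with hf
  have hfourier (χ : AddChar G ℂ) :
      ∑ x, f x * χ x = (∑ d ∈ D, χ d - α) * (∑ d ∈ D, χ d - β) := by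
    simp only [hf, add_mul, sub_mul, sum_add_distrib, sum_sub_distrib,
      sum_addConvolution_mul_addChar, mul_assoc, ← mul_sum]
    simp only [ite_mul, one_mul, zero_mul, sum_ite_mem, univ_inter, sum_ite_eq', mem_univ,
      if_true, AddChar.map_zero_eq_one]
    ring
  have hconst (z : G) : f z = mu := by
    have hcard : (Fintype.card G : ℂ) ≠ 0 := Nat.cast_ne_zero.mpr Fintype.card_ne_zero
    apply mul_left_cancel₀ hcard
    rw [card_mul_apply_eq_sum_of_fourier_eq_zero fun χ h => ?_]
    · have := hfourier 1
      simp only [AddChar.one_apply, mul_one, sum_const, nsmul_eq_mul] at this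
      rw [this]
      exact_mod_cast hmu.symm
    · rw [hfourier]
      rcases hχ χ h with h | h <;> rw [h] <;> ring
  refine ⟨rfl, degree_cayley h0 hneg, fun v w h => ?_, fun v w hvw h => ?_⟩ <;>
    rw [cayley_adj_iff h0 hneg] at h <;> rw [card_commonNeighbors_cayley h0 hneg] <;>
    have hz := hconst (w - v)
  · have hne : w - v ≠ 0 := fun hz => h0 (hz ▸ h)
    simp only [hf, h, hne, if_true, if_false] at hz
    have hlam' : (lam : ℂ) = mu + α + β := by exact_mod_cast hlam
    exact_mod_cast (by linear_combination hz - hlam' :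
      (D.addConvolution D (w - v) : ℂ) = lam)
  · have hne : w - v ≠ 0 := sub_ne_zero.mpr hvw.symm
    simp only [hf, h, hne, if_false] at hz
    exact_mod_cast (by linear_combination hz : (D.addConvolution D (w - v) : ℂ) = mu)

end CayleyGraph

section PowerFibres

variable {F : Type*} [Field F] [Fintype F]

theorem mem_cycClass_iff_pow_eq {γ : Fˣ} (hγ : ∀ x : Fˣ, x ∈ Subgroup.zpowers γ) {N M : ℕ}
    (hNM : N * M = Fintype.card Fˣ) {i : ℕ} {x : F} :
    x ∈ cycClass γ N i ↔ x ^ M = (γ : F) ^ (i * M) := by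
  have horder : orderOf γ = N * M := by
    rw [hNM, ← Nat.card_eq_fintype_card, orderOf_eq_card_of_forall_mem_zpowers hγ]
  have hM : M ≠ 0 := right_ne_zero_of_mul (hNM ▸ Fintype.card_ne_zero)
  have key (n : ℤ) : γ ^ (n * M) = γ ^ ((i : ℤ) * M) ↔ (N : ℤ) ∣ n - i := by
    rw [eq_comm, zpow_eq_zpow_iff_modEq, horder, Int.modEq_iff_dvd, ← sub_mul, Nat.cast_mul,
      mul_dvd_mul_iff_right (Nat.cast_ne_zero.mpr hM)]
  have hpow (n : ℤ) : ((γ ^ n : Fˣ) : F) ^ M = (γ : F) ^ (i * M) ↔ (N : ℤ) ∣ n - i := by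
    rw [← key]
    norm_cast
    rw [zpow_mul, zpow_natCast]
  constructor
  · rintro ⟨k, rfl⟩
    exact (hpow _).mpr ⟨k, add_sub_cancel_left _ _⟩
  · intro hx
    have hx0 : x ≠ 0 := fun h => pow_ne_zero (i * M) γ.ne_zero (by rw [← hx, h, zero_pow hM])
    obtain ⟨n, hn⟩ := hγ (Units.mk0 x hx0)
    obtain rfl : ((γ ^ n : Fˣ) : F) = x := congrArg Units.val hn
    obtain ⟨k, hk⟩ := (hpow n).mp hx
    exact ⟨k, by rw [← hk, add_sub_cancel]⟩

theorem card_filter_pow_eq_one {n : ℕ} (hn : n ∣ Fintype.card Fˣ) :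
    #{x : F | x ^ n = 1} = n := by
  have hpos : 0 < n := Nat.pos_of_dvd_of_pos hn Fintype.card_pos
  obtain ⟨γ, hγ⟩ := IsCyclic.exists_ofOrder_eq_natCard (α := Fˣ)
  obtain ⟨m, hm⟩ := hn
  rw [Nat.card_eq_fintype_card] at hγ
  have hprim : IsPrimitiveRoot ((γ : F) ^ m) n :=
    (IsPrimitiveRoot.coe_units_iff.mpr (IsPrimitiveRoot.orderOf γ)).pow (orderOf_pos γ)
      (by rw [hγ, hm, mul_comm])
  calc #{x : F | x ^ n = 1} = #(nthRootsFinset n (1 : F)) :=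
        congrArg card (by ext x; simp [mem_nthRootsFinset hpos])
    _ = n := hprim.card_nthRootsFinset

theorem card_filter_pow_eq_and {n : ℕ} {b e : F} (hb : b ≠ 0) (p : F → Prop) :
    #{x : F | x ^ n = b ^ n * e ∧ p x} = #{x : F | x ^ n = e ∧ p (b * x)} := by
  symm
  refine card_nbij' (b * ·) (b⁻¹ * ·) ?_ ?_ ?_ ?_ <;>
    simp +contextual [Set.MapsTo, Set.LeftInvOn, hb, mul_pow]

theorem card_filter_pow_mul_eq_one_and {m n : ℕ} (hm : m ≠ 0) (hn : n ≠ 0) (hmn : m.Coprime n)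
    {p : F → Prop} (hp : ∀ s x, s ^ m = 1 → (p (s * x) ↔ p x)) :
    #{x : F | x ^ (m * n) = 1 ∧ p x} = #{s : F | s ^ m = 1} * #{x : F | x ^ n = 1 ∧ p x} := by
  obtain ⟨a, b, hab⟩ := hmn.isCoprime
  have hbezout {x : F} (hx : x ≠ 0) : (x ^ m) ^ a * (x ^ n) ^ b = x := by
    simp_rw [← zpow_natCast x, ← zpow_mul, ← zpow_add₀ hx, mul_comm _ a, mul_comm _ b, hab,
      zpow_one]
  have hne {x : F} {k : ℕ} (hk : k ≠ 0) (hx : x ^ k = 1) : x ≠ 0 :=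
    (IsUnit.of_pow_eq_one hx hk).ne_zero
  rw [← card_product]
  symm
  refine card_nbij (fun q => q.1 * q.2) ?_ ?_ ?_
  · rintro ⟨s, u⟩
    simp only [coe_product, coe_filter, mem_univ, true_and, Set.mem_prod, Set.mem_ofPred_eq]
    rintro ⟨hs, hu, hpu⟩
    exact ⟨by rw [mul_pow, pow_mul, hs, mul_comm m, pow_mul, hu, one_pow, one_pow, one_mul],
      (hp s u hs).mpr hpu⟩
  · rintro ⟨s, u⟩ hsu ⟨s', u'⟩ hsu' (h : s * u = s' * u')
    simp only [coe_product, coe_filter, mem_univ, true_and, Set.mem_prod,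
      Set.mem_ofPred_eq] at hsu hsu'
    obtain ⟨⟨hs, hu, -⟩, hs', hu', -⟩ := And.intro hsu hsu'
    have hpow : s ^ n = s' ^ n := by
      simpa only [mul_pow, hu, hu', mul_one] using congrArg (· ^ n) h
    obtain rfl : s = s' := by
      rw [← hbezout (hne hm hs), ← hbezout (hne hm hs'), hs, hs', hpow]
    rw [mul_left_cancel₀ (hne hm hs) h]
  · intro x hx
    simp only [coe_filter, mem_univ, true_and, Set.mem_ofPred_eq] at hx
    have hx0 : x ≠ 0 := hne (mul_ne_zero hm hn) hx.1
    have hs : ((x ^ n) ^ b) ^ m = 1 := by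
      rw [← zpow_natCast, zpow_comm, zpow_natCast, ← pow_mul, mul_comm, hx.1, one_zpow]
    have hu : ((x ^ m) ^ a) ^ n = 1 := by
      rw [← zpow_natCast, zpow_comm, zpow_natCast, ← pow_mul, hx.1, one_zpow]
    have hmul : (x ^ n) ^ b * (x ^ m) ^ a = x := by rw [mul_comm, hbezout hx0]
    refine ⟨((x ^ n) ^ b, (x ^ m) ^ a), ?_, hmul⟩
    simpa [hs, hu] using (hp _ _ hs).mp (hmul.symm ▸ hx.2)

end PowerFibres

section SubfieldCharacterSums

variable {K F : Type*} [Field K] [Fintype K] [Field F] [Finite F] [Algebra K F]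

theorem exists_sum_addChar_smul_eq_ite_trace {ψ : AddChar F ℂ} (hψ : ψ ≠ 1) :
    ∃ a : F, a ≠ 0 ∧ ∀ y : F,
      ∑ s : K, ψ (s • y) = if Algebra.trace K F (a * y) = 0 then (Fintype.card K : ℂ) else 0 := by
  obtain ⟨χ, hχ⟩ : ∃ χ : AddChar K ℂ, χ ≠ 1 := by
    obtain ⟨χ, hχ⟩ := AddChar.exists_apply_ne_zero (α := K) |>.mpr one_ne_zero
    exact ⟨χ, fun h => hχ (by simp [h])⟩
  let τ : AddChar F ℂ := χ.compAddMonoidHom (Algebra.trace K F).toAddMonoidHom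
  have hτ : τ.IsPrimitive := by
    refine AddChar.IsPrimitive.of_ne_one fun h => hχ ?_
    ext t
    obtain ⟨x, rfl⟩ := Algebra.trace_surjective K F t
    exact DFunLike.congr_fun h x
  cases nonempty_fintype F
  obtain ⟨a, rfl⟩ : ∃ a, τ.mulShift a = ψ :=
    ((Fintype.bijective_iff_injective_and_card _).mpr
      ⟨AddChar.to_mulShift_inj_of_isPrimitive hτ, AddChar.card_eq.symm⟩).2 ψ
  refine ⟨a, fun h => hψ (by rw [h, AddChar.mulShift_zero]), fun y => ?_⟩
  calc ∑ s : K, τ.mulShift a (s • y)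
      = ∑ s : K, χ (s * Algebra.trace K F (a * y)) := by
        simp [τ, AddChar.mulShift_apply]
    _ = if Algebra.trace K F (a * y) = 0 then (Fintype.card K : ℂ) else 0 := by
        rw [AddChar.sum_mulShift _ (AddChar.IsPrimitive.of_ne_one hχ), Nat.cast_ite, Nat.cast_zero]

theorem exists_card_filter_trace_eq_of_smul_mem {D : Finset F}
    (hD : ∀ s : K, s ≠ 0 → ∀ x ∈ D, s • x ∈ D) {ψ : AddChar F ℂ} (hψ : ψ ≠ 1) :
    ∃ a : F, a ≠ 0 ∧ #D + (Fintype.card K - 1) * ∑ x ∈ D, ψ x =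
      Fintype.card K * #{x ∈ D | Algebra.trace K F (a * x) = 0} := by
  obtain ⟨a, ha, hsum⟩ := exists_sum_addChar_smul_eq_ite_trace (K := K) hψ
  have hscale (s : K) (hs : s ≠ 0) : ∑ x ∈ D, ψ (s • x) = ∑ x ∈ D, ψ x := by
    refine sum_nbij' (s • ·) (s⁻¹ • ·) (hD s hs) (hD s⁻¹ (inv_ne_zero hs)) ?_ ?_ ?_ <;> simp [hs]
  refine ⟨a, ha, ?_⟩
  calc (#D : ℂ) + (Fintype.card K - 1) * ∑ x ∈ D, ψ x
      = ∑ s : K, ∑ x ∈ D, ψ (s • x) := by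
        rw [← add_sum_erase univ _ (mem_univ 0),
          sum_congr rfl fun s hs => hscale s (ne_of_mem_erase hs)]
        simp [card_erase_of_mem, Nat.cast_sub Fintype.card_pos]
    _ = ∑ x ∈ D, if Algebra.trace K F (a * x) = 0 then (Fintype.card K : ℂ) else 0 := by
        rw [sum_comm]
        exact sum_congr rfl fun x _ => hsum x
    _ = Fintype.card K * #{x ∈ D | Algebra.trace K F (a * x) = 0} := by
        rw [← sum_filter, sum_const, nsmul_eq_mul, mul_comm]

end SubfieldCharacterSums

section NormOne

theorem pow_sixtyFive_eq_one {M : Type*} [Monoid M] {v w : M} (hw : w ^ 5 = 1) (hv : v ^ 13 = w) :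
    v ^ 65 = 1 := by
  rw [pow_mul v 13 5, hv, hw]

theorem pow_two_pow_eq_add_sum_of_sq_eq_add {R : Type*} [CommRing R] [CharP R 2] {y b : R}
    (h : y ^ 2 = y + b) (k : ℕ) : y ^ 2 ^ k = y + ∑ i ∈ range k, b ^ 2 ^ i := by
  induction k with
  | zero => simp
  | succ k ih =>
    rw [sum_range_succ', pow_zero, pow_one, pow_succ, pow_mul, ih, CharTwo.add_sq, CharTwo.sum_sq,
      h]
    simp_rw [pow_succ 2, pow_mul]
    ring

variable {F : Type*} [Field F]

/-- The trace `v + v ^ 64` from the field of order `2 ^ 12` to its subfield of order `2 ^ 6`.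
It is used for elements with `v ^ 65 = 1`, those of norm one, where it equals `v + v⁻¹`. -/
def quadTrace (v : F) : F :=
  v + v ^ 64

/-- The trace from the field of order `2 ^ 12` to its subfield of order `2 ^ 3`, as a power sum
with values in the larger field. -/
def quarticTrace (x : F) : F :=
  x + x ^ 8 + x ^ 64 + x ^ 512

theorem quarticTrace_mul_eq_zero_iff {s x : F} (hs : s ^ 7 = 1) :
    quarticTrace (s * x) = 0 ↔ quarticTrace x = 0 := by
  have hs0 : s ≠ 0 := (IsUnit.of_pow_eq_one hs (by norm_num)).ne_zero
  rw [quarticTrace, mul_pow, mul_pow, mul_pow, pow_eq_pow_mod 8 hs, pow_eq_pow_mod 64 hs,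
    pow_eq_pow_mod 512 hs]
  simp only [Nat.reduceMod, pow_one, ← mul_add, mul_eq_zero, or_iff_right hs0, quarticTrace]

variable [CharP F 2] {c v : F}

theorem quadTrace_pow_two_pow (v : F) (n : ℕ) : quadTrace (v ^ 2 ^ n) = quadTrace v ^ 2 ^ n := by
  rw [quadTrace, quadTrace, add_pow_char_pow, pow_right_comm]

theorem quadTrace_pow_sixtyFour (hv : v ^ 65 = 1) : quadTrace v ^ 64 = quadTrace v := by
  have hv' : (v ^ 64) ^ 64 = v := by
    rw [show (v ^ 64) ^ 64 = (v ^ 65) ^ 63 * v by ring, hv, one_pow, one_mul]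
  calc quadTrace v ^ 64 = v ^ 64 + (v ^ 64) ^ 64 := (quadTrace_pow_two_pow v 6).symm
    _ = quadTrace v := by rw [hv', add_comm, quadTrace]

theorem sq_add_quadTrace_mul_add_one (hv : v ^ 65 = 1) : v ^ 2 + quadTrace v * v + 1 = 0 := by
  rw [quadTrace]
  linear_combination (v ^ 2 + 1) * CharTwo.two_eq_zero (R := F) + hv

theorem quadTrace_eq_zero_iff (hv : v ^ 65 = 1) : quadTrace v = 0 ↔ v = 1 := by
  refine ⟨fun h => ?_, fun h => by rw [h, quadTrace, one_pow, CharTwo.add_self_eq_zero]⟩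
  have hsq : (v + 1) ^ 2 = 0 := by
    rw [CharTwo.add_sq, one_pow]
    simpa [h] using sq_add_quadTrace_mul_add_one hv
  exact CharTwo.add_eq_zero.mp (pow_eq_zero_iff two_ne_zero |>.mp hsq)

theorem quadTrace_eq_of_sq_add_mul_add_one {t : F} (hv : v ^ 65 = 1)
    (h : v ^ 2 + t * v + 1 = 0) : quadTrace v = t := by
  have hv0 : v ≠ 0 := (IsUnit.of_pow_eq_one hv (by norm_num)).ne_zero
  apply mul_right_cancel₀ hv0
  linear_combination sq_add_quadTrace_mul_add_one hv - h

theorem quadTrace_pow_sixtyThree (hv : v ^ 65 = 1) (hv1 : v ≠ 1) : quadTrace v ^ 63 = 1 := by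
  apply mul_right_cancel₀ (mt (quadTrace_eq_zero_iff hv).mp hv1)
  rw [← pow_succ, quadTrace_pow_sixtyFour hv, one_mul]

theorem quarticTrace_eq_zero_iff (hc : c ^ 63 = 1) (hv : v ^ 65 = 1) :
    quarticTrace (c * v) = 0 ↔ v = 1 ∨ v ≠ 1 ∧ quadTrace v ^ 7 = c ^ 56 := by
  have hc0 : c ≠ 0 := (IsUnit.of_pow_eq_one hc (by norm_num)).ne_zero
  have hc64 : c ^ 64 = c := by rw [pow_succ, hc, one_mul]
  have htrace : quarticTrace (c * v) = c * quadTrace v + (c * quadTrace v) ^ 8 := by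
    have hT : quadTrace v ^ 8 = v ^ 8 + (v ^ 8) ^ 64 := (quadTrace_pow_two_pow v 3).symm
    rw [mul_pow c (quadTrace v), hT, quarticTrace, quadTrace,
      mul_pow c v 64, show (c * v) ^ 512 = (c ^ 64 * v ^ 64) ^ 8 by ring, hc64]
    ring
  rw [htrace]
  rcases eq_or_ne v 1 with rfl | hv1
  · simp [(quadTrace_eq_zero_iff hv).mpr rfl]
  have hT0 := mt (quadTrace_eq_zero_iff hv).mp hv1
  have hinv : c ^ 7 * c ^ 56 = 1 := by rw [← pow_add, hc]
  calc c * quadTrace v + (c * quadTrace v) ^ 8 = 0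
      ↔ (c * quadTrace v) * ((c * quadTrace v) ^ 7 + 1) = 0 := by ring_nf
    _ ↔ c ^ 7 * quadTrace v ^ 7 = c ^ 7 * c ^ 56 := by
      rw [hinv, mul_eq_zero, or_iff_right (mul_ne_zero hc0 hT0), CharTwo.add_eq_zero, mul_pow]
    _ ↔ v = 1 ∨ v ≠ 1 ∧ quadTrace v ^ 7 = c ^ 56 := by
      simp [hv1, hc0]

end NormOne

section CubeClasses

variable {F : Type*} [Field F] [CharP F 2] {v w ε s : F}

-- Artin-Schreier: `y = v / T` with `T = quadTrace v` satisfies `y ^ 2 = y + T⁻²` and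
-- `y ^ 64 = y + 1`, so the trace of `T⁻²` from the field of order `64` to the prime field is `1`.
theorem mul_eq_one_of_quadTrace_eq_mul (hv : v ^ 65 = 1) (hv1 : v ≠ 1) (hε : ε ^ 3 = 1)
    (hs : s ^ 7 = 1) (hT : quadTrace v = ε * s) : (ε + ε ^ 2) * (s ^ 3 + s ^ 5 + s ^ 6) = 1 := by
  have hT0 := mt (quadTrace_eq_zero_iff hv).mp hv1
  have hb : ε * s ^ 5 * quadTrace v ^ 2 = 1 := by
    rw [hT]
    linear_combination s ^ 7 * hε + hs
  have hy : (v / quadTrace v) ^ 2 = v / quadTrace v + ε * s ^ 5 := by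
    field_simp
    linear_combination sq_add_quadTrace_mul_add_one hv - hb -
      (quadTrace v * v + 1) * CharTwo.two_eq_zero (R := F)
  have hy64 : (v / quadTrace v) ^ 64 = v / quadTrace v + 1 := by
    rw [div_pow, quadTrace_pow_sixtyFour hv, div_add_one hT0]
    congr 1
    rw [quadTrace]
    linear_combination -v * CharTwo.two_eq_zero (R := F)
  have hsum := (pow_two_pow_eq_add_sum_of_sq_eq_add hy 6).symm.trans hy64
  simp only [sum_range_succ, sum_range_zero, add_right_inj] at hsum
  have hterm (n : ℕ) : (ε * s ^ 5) ^ n = ε ^ (n % 3) * s ^ (5 * n % 7) := by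
    rw [mul_pow, ← pow_mul, pow_eq_pow_mod n hε, pow_eq_pow_mod (5 * n) hs]
  norm_num [hterm] at hsum
  linear_combination hsum

theorem quartic_eq_zero_of_mul_eq_one (hε : ε ^ 2 + ε + 1 = 0)
    (h : (ε + ε ^ 2) * (s ^ 3 + s ^ 5 + s ^ 6) = 1) : s ^ 4 + s ^ 3 + s ^ 2 + 1 = 0 := by
  have hfactor : (s + 1) ^ 2 * (s ^ 4 + s ^ 3 + s ^ 2 + 1) = 0 := by
    linear_combination -h + (s ^ 3 + s ^ 5 + s ^ 6) * hε +
      (s ^ 5 + 2 * s ^ 4 + s ^ 3 + s ^ 2 + s) * CharTwo.two_eq_zero (R := F)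
  rcases mul_eq_zero.mp hfactor with h1 | hquartic
  · obtain rfl : s = 1 := CharTwo.add_eq_zero.mp (pow_eq_zero_iff two_ne_zero |>.mp h1)
    linear_combination 2 * CharTwo.two_eq_zero (R := F)
  · exact hquartic

theorem pow_seven_eq_one_of_quartic (hs : s ^ 4 + s ^ 3 + s ^ 2 + 1 = 0) : s ^ 7 = 1 := by
  linear_combination (s ^ 3 + s ^ 2 + 1) * hs -
    (s ^ 6 + s ^ 5 + s ^ 4 + s ^ 3 + s ^ 2 + 1) * CharTwo.two_eq_zero (R := F)

-- The quadratic equation reduces `v ^ 13` to a linear polynomial in `v`, which is solved for `v`.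
theorem eq_mul_pow_thirteen_add_of_quartic (hε : ε ^ 2 + ε + 1 = 0)
    (hs : s ^ 4 + s ^ 3 + s ^ 2 + 1 = 0) (hv : v ^ 2 + ε * s * v + 1 = 0) :
    v = ε ^ 2 * s * (v ^ 13 + 1 + s ^ 2) + s ^ 2 + s + 1 := by
  have := CharTwo.two_eq_zero (R := F)
  have h4 : v ^ 4 = s ^ 3 * v + ε ^ 2 * s ^ 2 + 1 := by grind
  have h8 : v ^ 8 = ε * v + ε * s ^ 4 + s ^ 6 + 1 := by grind
  rw [show v ^ 13 = v * v ^ 4 * v ^ 8 by ring, h4, h8]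
  grind

theorem sq_add_mul_pow_thirteen_add_one_of_quartic (hε : ε ^ 2 + ε + 1 = 0)
    (hs : s ^ 4 + s ^ 3 + s ^ 2 + 1 = 0) (hv : v ^ 2 + ε * s * v + 1 = 0) :
    (v ^ 13) ^ 2 + ε ^ 2 * v ^ 13 + 1 = 0 := by
  have := CharTwo.two_eq_zero (R := F)
  have h13 := eq_mul_pow_thirteen_add_of_quartic hε hs hv
  generalize v ^ 13 = w at h13 ⊢
  grind

theorem sq_add_mul_add_one_of_quartic (hε : ε ^ 2 + ε + 1 = 0)
    (hs : s ^ 4 + s ^ 3 + s ^ 2 + 1 = 0) (hw : w ^ 2 + ε ^ 2 * w + 1 = 0)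
    (hv : v = ε ^ 2 * s * (w + 1 + s ^ 2) + s ^ 2 + s + 1) : v ^ 2 + ε * s * v + 1 = 0 := by
  have := CharTwo.two_eq_zero (R := F)
  subst hv
  grind

theorem pow_thirteen_eq_of_quartic (hε : ε ^ 2 + ε + 1 = 0)
    (hs : s ^ 4 + s ^ 3 + s ^ 2 + 1 = 0) (hquad : v ^ 2 + ε * s * v + 1 = 0)
    (hv : v = ε ^ 2 * s * (w + 1 + s ^ 2) + s ^ 2 + s + 1) : v ^ 13 = w := by
  have hε0 : ε ≠ 0 := by rintro rfl; simp at hε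
  have hs0 : s ≠ 0 := by rintro rfl; simp at hs
  apply mul_left_cancel₀ (mul_ne_zero (pow_ne_zero 2 hε0) hs0)
  linear_combination hv - eq_mul_pow_thirteen_add_of_quartic hε hs hquad

end CubeClasses

section TraceFibres

variable {F : Type*} [Field F] [Fintype F]

/-- The elements `v ≠ 1` of the coset `v ^ 13 = w` of the group of 13th roots of unity whose
trace `T = quadTrace v` has `T ^ 7 = ε`. As the field of order `8` has seven units, `T ^ 7`
encodes the class of `T` modulo these units. -/
noncomputable def traceFiber (w ε : F) : Finset F :=
  {v | v ^ 13 = w ∧ v ≠ 1 ∧ quadTrace v ^ 7 = ε}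

theorem mem_traceFiber {v w ε : F} :
    v ∈ traceFiber w ε ↔ v ^ 13 = w ∧ v ≠ 1 ∧ quadTrace v ^ 7 = ε := by
  simp only [traceFiber, mem_filter_univ]

theorem card_filter_pow_eq_and_eq_one (n : ℕ) (w : F) :
    #{v : F | v ^ n = w ∧ v = 1} = if w = 1 then 1 else 0 := by
  have hiff (v : F) : v ^ n = w ∧ v = 1 ↔ v = 1 ∧ w = 1 := by
    rw [and_comm, and_congr_right fun h => by rw [h, one_pow, eq_comm]]
  simp_rw [hiff]
  split_ifs with hw
  · exact card_eq_one.mpr ⟨1, by ext v; simp [hw]⟩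
  · simp [hw]

variable [CharP F 2] {c s v w ε ζ : F}

theorem card_filter_quarticTrace_eq_zero (hw : w ^ 5 = 1) (hc : c ^ 63 = 1) :
    #{v : F | v ^ 13 = w ∧ quarticTrace (c * v) = 0} =
      (if w = 1 then 1 else 0) + #(traceFiber w (c ^ 56)) := by
  have hiff (v : F) : v ^ 13 = w ∧ quarticTrace (c * v) = 0 ↔
      v ^ 13 = w ∧ v = 1 ∨ v ∈ traceFiber w (c ^ 56) := by
    rw [mem_traceFiber, and_congr_right fun h =>
      quarticTrace_eq_zero_iff hc (pow_sixtyFive_eq_one hw h), and_or_left]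
  have hdisj : Disjoint ({v : F | v ^ 13 = w ∧ v = 1} : Finset F) (traceFiber w (c ^ 56)) :=
    disjoint_left.mpr fun v hv hv' => (mem_traceFiber.mp hv').2.1 (mem_filter.mp hv).2.2
  rw [← card_filter_pow_eq_and_eq_one 13 w, ← card_union_of_disjoint hdisj]
  congr 1
  ext v
  rw [mem_filter_univ, hiff, mem_union, mem_filter_univ]

theorem sum_card_traceFiber_add_ite (hζ : IsPrimitiveRoot ζ 9) (hw : w ^ 5 = 1) :
    ∑ i ∈ range 9, #(traceFiber w (ζ ^ i)) + (if w = 1 then 1 else 0) =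
      #{v : F | v ^ 13 = w} := by
  have hmaps : ∀ v ∈ ({v : F | v ^ 13 = w ∧ v ≠ 1} : Finset F),
      quadTrace v ^ 7 ∈ (range 9).image (ζ ^ ·) := by
    intro v hv
    obtain ⟨hvw, hv1⟩ := (mem_filter_univ v).mp hv
    have hT : (quadTrace v ^ 7) ^ 9 = 1 := by
      rw [← pow_mul, quadTrace_pow_sixtyThree (pow_sixtyFive_eq_one hw hvw) hv1]
    obtain ⟨i, hi, h⟩ := hζ.eq_pow_of_pow_eq_one hT
    exact mem_image.mpr ⟨i, mem_range.mpr hi, h⟩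
  have hinj : Set.InjOn (ζ ^ ·) (range 9) := fun i hi j hj h =>
    hζ.pow_inj (mem_range.mp hi) (mem_range.mp hj) h
  calc ∑ i ∈ range 9, #(traceFiber w (ζ ^ i)) + (if w = 1 then 1 else 0)
      = #{v : F | v ^ 13 = w ∧ v ≠ 1} + #{v : F | v ^ 13 = w ∧ v = 1} := by
        rw [card_filter_pow_eq_and_eq_one, card_eq_sum_card_fiberwise hmaps, sum_image hinj]
        simp_rw [filter_filter, and_assoc, traceFiber]
    _ = #{v : F | v ^ 13 = w} := by
        simp_rw [← filter_filter]
        rw [add_comm, card_filter_add_card_filter_not]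

theorem card_traceFiber_pow_four (hF : Fintype.card F = 2 ^ 12) (hw : w ^ 5 = 1)
    (hε : ε ^ 9 = 1) : #(traceFiber w (ε ^ 4)) = #(traceFiber w ε) := by
  have hfrob (v : F) {m n : ℕ} (hmn : m + n = 12) : (v ^ 2 ^ m) ^ 2 ^ n = v := by
    rw [← pow_mul, ← pow_add, hmn, ← hF, FiniteField.pow_card]
  have hmem (n : ℕ) {δ δ' : F} (hwn : w ^ 2 ^ n = w) (hδ : δ ^ 2 ^ n = δ') {v : F}
      (hv : v ∈ traceFiber w δ) : v ^ 2 ^ n ∈ traceFiber w δ' := by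
    obtain ⟨hvw, hv1, hvδ⟩ := mem_traceFiber.mp hv
    refine mem_traceFiber.mpr ⟨by rw [pow_right_comm, hvw, hwn], ?_, ?_⟩
    · rwa [Ne, ← mul_one (2 ^ n), ExpChar.pow_prime_pow_mul_eq_one_iff, pow_one]
    · rw [quadTrace_pow_two_pow, pow_right_comm, hvδ, hδ]
  refine card_nbij' (· ^ 2 ^ 4) (· ^ 2 ^ 8)
    (fun v hv => hmem 4 ?_ ?_ hv) (fun v hv => hmem 8 ?_ ?_ hv)
    (fun v _ => hfrob v rfl) (fun v _ => hfrob v rfl)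
  · exact (pow_eq_pow_mod _ hw).trans (pow_one w)
  · exact (pow_mul ε 4 _).symm.trans ((pow_eq_pow_mod _ hε).trans (pow_one ε))
  · exact (pow_eq_pow_mod _ hw).trans (pow_one w)
  · exact pow_eq_pow_mod _ hε

theorem traceFiber_one (hw : w ^ 5 = 1) : traceFiber w 1 = ∅ := by
  refine eq_empty_of_forall_notMem fun v hv => ?_
  obtain ⟨hvw, hv1, hT⟩ := mem_traceFiber.mp hv
  have h := mul_eq_one_of_quadTrace_eq_mul (pow_sixtyFive_eq_one hw hvw) hv1 (one_pow 3) hT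
    (one_mul _).symm
  rw [one_pow, CharTwo.add_self_eq_zero, zero_mul] at h
  exact zero_ne_one h

theorem quartic_of_mem_traceFiber (hw : w ^ 5 = 1) (hε : ε ^ 2 + ε + 1 = 0)
    (hv : v ∈ traceFiber w ε) :
    (ε ^ 2 * quadTrace v) ^ 4 + (ε ^ 2 * quadTrace v) ^ 3 + (ε ^ 2 * quadTrace v) ^ 2 + 1 = 0 ∧
      v ^ 2 + ε * (ε ^ 2 * quadTrace v) * v + 1 = 0 := by
  obtain ⟨hvw, hv1, hT⟩ := mem_traceFiber.mp hv
  have hε3 : ε ^ 3 = 1 := by linear_combination (ε - 1) * hε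
  have hv65 := pow_sixtyFive_eq_one hw hvw
  have hεs : quadTrace v = ε * (ε ^ 2 * quadTrace v) := by
    linear_combination -quadTrace v * hε3
  have hs : (ε ^ 2 * quadTrace v) ^ 7 = 1 := by
    rw [mul_pow, hT, ← pow_mul, ← pow_succ, pow_mul ε 3 5, hε3, one_pow]
  exact ⟨quartic_eq_zero_of_mul_eq_one hε (mul_eq_one_of_quadTrace_eq_mul hv65 hv1 hε3 hs hεs),
    hεs ▸ sq_add_quadTrace_mul_add_one hv65⟩

theorem traceFiber_eq_empty (hw : w ^ 5 = 1) (hε : ε ^ 2 + ε + 1 = 0) (h : w + w ^ 4 ≠ ε ^ 2) :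
    traceFiber w ε = ∅ := by
  refine eq_empty_of_forall_notMem fun v hv => h ?_
  obtain ⟨hs, hquad⟩ := quartic_of_mem_traceFiber hw hε hv
  have hw2 := sq_add_mul_pow_thirteen_add_one_of_quartic hε hs hquad
  rw [(mem_traceFiber.mp hv).1] at hw2
  linear_combination w ^ 4 * hw2 - (w + ε ^ 2) * hw -
    ε ^ 2 * CharTwo.two_eq_zero (R := F)

theorem card_quartic_roots (h7 : 7 ∣ Fintype.card Fˣ) :
    #{s : F | s ^ 4 + s ^ 3 + s ^ 2 + 1 = 0} = 4 := by
  have hle (p : F[X]) (hp : p ≠ 0) : #{s : F | p.IsRoot s} ≤ p.natDegree :=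
    card_le_degree_of_subset_roots fun s hs => by simpa [hp] using hs
  have hquartic := hle (X ^ 4 + X ^ 3 + X ^ 2 + 1) (Monic.ne_zero (by monicity!))
  have hcubic := hle (X ^ 3 + X ^ 2 + 1) (Monic.ne_zero (by monicity!))
  rw [show (X ^ 4 + X ^ 3 + X ^ 2 + 1 : F[X]).natDegree = 4 by compute_degree!] at hquartic
  rw [show (X ^ 3 + X ^ 2 + 1 : F[X]).natDegree = 3 by compute_degree!] at hcubic
  simp only [IsRoot.def, eval_add, eval_pow, eval_X, eval_one] at hquartic hcubic
  have hcover : ({s : F | s ^ 7 = 1} : Finset F) ⊆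
      ({s : F | s ^ 4 + s ^ 3 + s ^ 2 + 1 = 0 ∨ s ^ 3 + s ^ 2 + 1 = 0} : Finset F) := by
    intro s hs
    rw [mem_filter_univ] at hs ⊢
    rw [← mul_eq_zero]
    linear_combination hs +
      (s ^ 6 + s ^ 5 + s ^ 4 + s ^ 3 + s ^ 2 + 1) * CharTwo.two_eq_zero (R := F)
  have hseven := card_le_card hcover
  rw [filter_or, card_filter_pow_eq_one h7] at hseven
  have hunion := hseven.trans (card_union_le _ _)
  omega

theorem mem_traceFiber_of_quartic (hw : w ^ 5 = 1) (hε : ε ^ 2 + ε + 1 = 0)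
    (hs : s ^ 4 + s ^ 3 + s ^ 2 + 1 = 0) (hv : v ^ 13 = w) (hquad : v ^ 2 + ε * s * v + 1 = 0) :
    v ∈ traceFiber w ε := by
  have hε3 : ε ^ 3 = 1 := by linear_combination (ε - 1) * hε
  have hεs : (ε * s) ^ 7 = ε := by
    rw [mul_pow, pow_seven_eq_one_of_quartic hs, mul_one, pow_eq_pow_mod 7 hε3, pow_one]
  have hv65 := pow_sixtyFive_eq_one hw hv
  have hT := quadTrace_eq_of_sq_add_mul_add_one hv65 hquad
  refine mem_traceFiber.mpr ⟨hv, fun hv1 => ?_, hT ▸ hεs⟩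
  rw [← hT, (quadTrace_eq_zero_iff hv65).mpr hv1, zero_pow (by norm_num)] at hεs
  simp [← hεs] at hε

theorem card_traceFiber_eq_four (h7 : 7 ∣ Fintype.card Fˣ) (hw : w ^ 5 = 1)
    (hε : ε ^ 2 + ε + 1 = 0) (h : w + w ^ 4 = ε ^ 2) : #(traceFiber w ε) = 4 := by
  have hε3 : ε ^ 2 * ε = 1 := by linear_combination (ε - 1) * hε
  have hw2 : w ^ 2 + ε ^ 2 * w + 1 = 0 := by
    linear_combination (w ^ 2 + 1) * CharTwo.two_eq_zero (R := F) + hw - w * h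
  rw [← card_quartic_roots h7]
  refine card_nbij' (fun v => ε ^ 2 * quadTrace v)
    (fun s => ε ^ 2 * s * (w + 1 + s ^ 2) + s ^ 2 + s + 1) (fun v hv => ?_) (fun s hs => ?_)
    (fun v hv => ?_) (fun s hs => ?_)
  · simpa using (quartic_of_mem_traceFiber hw hε hv).1
  · have hs' : s ^ 4 + s ^ 3 + s ^ 2 + 1 = 0 := by simpa using hs
    have hquad := sq_add_mul_add_one_of_quartic hε hs' hw2 rfl
    exact mem_traceFiber_of_quartic hw hε hs' (pow_thirteen_eq_of_quartic hε hs' hquad rfl) hquad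
  · obtain ⟨hs, hquad⟩ := quartic_of_mem_traceFiber hw hε hv
    have hv13 := eq_mul_pow_thirteen_add_of_quartic hε hs hquad
    rw [(mem_traceFiber.mp hv).1] at hv13
    exact hv13.symm
  · have hs' : s ^ 4 + s ^ 3 + s ^ 2 + 1 = 0 := by simpa using hs
    have hquad := sq_add_mul_add_one_of_quartic hε hs' hw2 rfl
    have hv13 := pow_thirteen_eq_of_quartic hε hs' hquad rfl
    dsimp only
    rw [quadTrace_eq_of_sq_add_mul_add_one (pow_sixtyFive_eq_one hw hv13) hquad, ← mul_assoc, hε3,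
      one_mul]

theorem card_traceFiber_cube_root (h7 : 7 ∣ Fintype.card Fˣ) (hw : w ^ 5 = 1)
    (hε : ε ^ 2 + ε + 1 = 0) :
    #(traceFiber w ε) + #(traceFiber w (ε ^ 2)) = (if w = 1 then 0 else 4) ∧
      (#(traceFiber w ε) = 0 ∨ #(traceFiber w (ε ^ 2)) = 0) := by
  have hε' : (ε ^ 2) ^ 2 + ε ^ 2 + 1 = 0 := by linear_combination (ε ^ 2 - ε + 1) * hε
  have hε4 : (ε ^ 2) ^ 2 = ε := by linear_combination (ε ^ 2 - ε) * hε
  have hne : ε ≠ ε ^ 2 := fun h => one_ne_zero (α := F) <| by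
    linear_combination hε - ε * CharTwo.two_eq_zero (R := F) + h
  split_ifs with h1
  · have hzero : w + w ^ 4 = 0 := by rw [h1, one_pow, CharTwo.add_self_eq_zero]
    have hε0 : ε ≠ 0 := by rintro rfl; simp at hε
    rw [traceFiber_eq_empty hw hε (by rw [hzero]; exact (pow_ne_zero 2 hε0).symm),
      traceFiber_eq_empty hw hε' (by rw [hzero, hε4]; exact hε0.symm)]
    simp
  · have hgeom : w ^ 4 + w ^ 3 + w ^ 2 + w + 1 = 0 :=
      mul_left_cancel₀ (sub_ne_zero.mpr h1) (by linear_combination hw)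
    have hprod : (w + w ^ 4 - ε) * (w + w ^ 4 - ε ^ 2) = 0 := by
      linear_combination hgeom + w ^ 3 * hw + w ^ 5 * CharTwo.two_eq_zero (R := F) +
        (ε - 1 - (w + w ^ 4)) * hε
    rcases mul_eq_zero.mp hprod with h | h <;> rw [sub_eq_zero] at h
    · rw [traceFiber_eq_empty hw hε (by rwa [h]),
        card_traceFiber_eq_four h7 hw hε' (by rw [h, hε4])]
      simp
    · rw [traceFiber_eq_empty hw hε' (by rw [h, hε4]; exact hne.symm),
        card_traceFiber_eq_four h7 hw hε h]
      simp

end TraceFibres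

section FieldOfOrder4096

variable {F : Type*} [Field F] [Fintype F]

theorem card_units_eq_of_card_eq (hF : Fintype.card F = 2 ^ 12) : Fintype.card Fˣ = 4095 := by
  rw [Fintype.card_units, hF]
  norm_num

variable [CharP F 2] {w ζ : F}

-- Multiplication by `4` permutes cyclically the exponents in each nonzero class modulo `3`, so
-- their fibres have equal size, and `i`, `i + 2`, `i + 4` represent every class once.
theorem sum_three_card_traceFiber_mem (hF : Fintype.card F = 2 ^ 12) (hζ : IsPrimitiveRoot ζ 9)
    (hw : w ^ 5 = 1) (hw13 : #{v : F | v ^ 13 = w} = 13) (i : ℕ) :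
    ∑ j ∈ range 3, ((if w = 1 then 1 else 0) + #(traceFiber w (ζ ^ (i + 2 * j)))) ∈
      ({3, 7} : Set ℕ) := by
  have hmod (n : ℕ) : ζ ^ n = ζ ^ (n % 9) := pow_eq_pow_mod n hζ.pow_eq_one
  have hfour (k : ℕ) : #(traceFiber w (ζ ^ (4 * k % 9))) = #(traceFiber w (ζ ^ k)) := by
    rw [← hmod, mul_comm, pow_mul]
    exact card_traceFiber_pow_four hF hw (by rw [pow_right_comm, hζ.pow_eq_one, one_pow])
  have htotal := sum_card_traceFiber_add_ite hζ hw
  have hcube : (ζ ^ 3) ^ 2 + ζ ^ 3 + 1 = 0 := by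
    have := (hζ.pow (by norm_num) (by norm_num : 9 = 3 * 3)).geom_sum_eq_zero (by norm_num)
    simp only [sum_range_succ, sum_range_zero] at this
    linear_combination this
  have h7 : 7 ∣ Fintype.card Fˣ := by rw [card_units_eq_of_card_eq hF]; norm_num
  obtain ⟨hadd, hor⟩ := card_traceFiber_cube_root h7 hw hcube
  rw [← pow_mul] at hadd hor
  have hzero : #(traceFiber w (ζ ^ 0)) = 0 := by rw [pow_zero, traceFiber_one hw, card_empty]
  have hfour_one := hfour 1
  have hfour_four := hfour 4
  have hfour_two := hfour 2
  have hfour_eight := hfour 8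
  have hred (j : ℕ) : ζ ^ (i + j) = ζ ^ ((i % 9 + j) % 9) := by rw [hmod, Nat.mod_add_mod]
  have hi : i % 9 < 9 := Nat.mod_lt _ (by norm_num)
  simp only [hred, hw13, sum_range_succ, sum_range_zero, Set.mem_insert_iff,
    Set.mem_singleton_iff] at htotal ⊢
  generalize i % 9 = r at hi ⊢
  clear hmod hfour hred
  simp only [Nat.reduceMul, Nat.reduceMod] at hfour_one hfour_four hfour_two hfour_eight hadd hor
  split_ifs at htotal hadd ⊢ <;> interval_cases r <;>
    simp only [Nat.reduceMul, Nat.reduceAdd, Nat.reduceMod] <;> omega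

end FieldOfOrder4096

section DeLangeSet

variable {F : Type*} [Field F] [Fintype F] {a b c x ζ : F}

/-- De Lange's connection set `C₀ ∪ C₅ ∪ C₁₀` in the field of order `2 ^ 12`, for the cyclotomic
classes of order `45` of a primitive element `γ`. It depends only on `ζ = γ ^ 455`, a primitive
ninth root of unity: `C₅ⱼ` is the set of all `x` with `x ^ 91 = ζ ^ j`. -/
noncomputable def deLangeSet (ζ : F) : Finset F :=
  {x | ∃ j ∈ range 3, x ^ 91 = ζ ^ j}

theorem mem_deLangeSet : x ∈ deLangeSet ζ ↔ ∃ j ∈ range 3, x ^ 91 = ζ ^ j := by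
  simp only [deLangeSet, mem_filter_univ]

theorem zero_notMem_deLangeSet (hζ : IsPrimitiveRoot ζ 9) : 0 ∉ deLangeSet ζ := by
  rw [mem_deLangeSet]
  rintro ⟨j, -, hj⟩
  exact pow_ne_zero j (hζ.ne_zero (by norm_num)) (by rw [← hj, zero_pow (by norm_num)])

theorem mul_mem_deLangeSet {s : F} (hs : s ^ 7 = 1) (hx : x ∈ deLangeSet ζ) :
    s * x ∈ deLangeSet ζ := by
  obtain ⟨j, hj, hxj⟩ := mem_deLangeSet.mp hx
  exact mem_deLangeSet.mpr ⟨j, hj, by rw [mul_pow, pow_mul s 7 13, hs, one_pow, one_mul, hxj]⟩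

theorem card_filter_deLangeSet (hζ : IsPrimitiveRoot ζ 9) (p : F → Prop) :
    #{x ∈ deLangeSet ζ | p x} = ∑ j ∈ range 3, #{x : F | x ^ 91 = 1 ∧ p (ζ ^ j * x)} := by
  have hmaps : ∀ x ∈ ({x ∈ deLangeSet ζ | p x} : Finset F),
      x ^ 91 ∈ (range 3).image (ζ ^ ·) := by
    intro x hx
    obtain ⟨j, hj, hxj⟩ := mem_deLangeSet.mp (mem_filter.mp hx).1
    exact mem_image.mpr ⟨j, hj, hxj.symm⟩
  have hinj : Set.InjOn (ζ ^ ·) (range 3) := fun i hi j hj h =>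
    hζ.pow_inj (lt_of_lt_of_le (mem_range.mp hi) (by norm_num))
      (lt_of_lt_of_le (mem_range.mp hj) (by norm_num)) h
  rw [card_eq_sum_card_fiberwise hmaps, sum_image hinj]
  refine sum_congr rfl fun j hj => ?_
  have hζj : ζ ^ j = (ζ ^ j) ^ 91 * 1 := by
    rw [mul_one, pow_right_comm, pow_eq_pow_mod 91 hζ.pow_eq_one, pow_one]
  rw [← card_filter_pow_eq_and (pow_ne_zero j (hζ.ne_zero (by norm_num))), ← hζj]
  congr 1
  ext x
  simp only [mem_filter, mem_univ, true_and, mem_deLangeSet]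
  exact ⟨fun h => ⟨h.2, h.1.2⟩, fun h => ⟨⟨⟨j, hj, h.1⟩, h.2⟩, h.1⟩⟩

theorem card_deLangeSet (hF : Fintype.card F = 2 ^ 12) (hζ : IsPrimitiveRoot ζ 9) :
    #(deLangeSet ζ) = 273 := by
  have h91 : 91 ∣ Fintype.card Fˣ := by rw [card_units_eq_of_card_eq hF]; norm_num
  have h := card_filter_deLangeSet hζ fun _ => True
  simpa only [and_true, filter_true, card_filter_pow_eq_one h91, sum_const, card_range,
    smul_eq_mul, Nat.reduceMul] using h

variable [CharP F 2]

theorem card_filter_pow_ninetyOne_quarticTrace_eq_zero (hF : Fintype.card F = 2 ^ 12)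
    (hb : b ^ 65 = 1) (hc : c ^ 63 = 1) :
    #{x : F | x ^ 91 = 1 ∧ quarticTrace (c * b * x) = 0} =
      7 * ((if b ^ 13 = 1 then 1 else 0) + #(traceFiber (b ^ 13) (c ^ 56))) := by
  have hb0 : b ≠ 0 := (IsUnit.of_pow_eq_one hb (by norm_num)).ne_zero
  have h7 : 7 ∣ Fintype.card Fˣ := by rw [card_units_eq_of_card_eq hF]; norm_num
  have hcoset := card_filter_pow_eq_and (n := 13) (e := 1) hb0 fun v => quarticTrace (c * v) = 0
  rw [mul_one] at hcoset
  rw [← card_filter_quarticTrace_eq_zero (by rw [← pow_mul, hb]) hc, hcoset]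
  simp_rw [← mul_assoc c b]
  rw [show 91 = 7 * 13 from rfl, card_filter_pow_mul_eq_one_and (by norm_num) (by norm_num)
    (by norm_num) fun s x hs => by rw [mul_left_comm, quarticTrace_mul_eq_zero_iff hs],
    card_filter_pow_eq_one h7]

theorem card_filter_deLangeSet_quarticTrace_mem (hF : Fintype.card F = 2 ^ 12)
    (hζ : IsPrimitiveRoot ζ 9) (ha : a ≠ 0) :
    #{x ∈ deLangeSet ζ | quarticTrace (a * x) = 0} ∈
      ({21, 49} : Set ℕ) := by
  have ha' : a ^ 4095 = 1 := by
    have h := FiniteField.pow_card_sub_one_eq_one a ha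
    rwa [hF] at h
  obtain ⟨c, b, hc, hb, hcb⟩ : ∃ c b : F, c ^ 63 = 1 ∧ b ^ 65 = 1 ∧ c * b = a := by
    refine ⟨a ^ 2080, a ^ 2016, ?_, ?_, ?_⟩
    · rw [← pow_mul, pow_mul a 4095 32, ha', one_pow]
    · rw [← pow_mul, pow_mul a 4095 32, ha', one_pow]
    · rw [← pow_add, pow_succ a 4095, ha', one_mul]
  have hb0 : b ≠ 0 := (IsUnit.of_pow_eq_one hb (by norm_num)).ne_zero
  have h13 : #{v : F | v ^ 13 = b ^ 13} = 13 := by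
    have h := card_filter_pow_eq_and (n := 13) (e := 1) hb0 fun _ => True
    simp only [mul_one, and_true] at h
    rw [h, card_filter_pow_eq_one (by rw [card_units_eq_of_card_eq hF]; norm_num)]
  obtain ⟨i, -, hi⟩ : ∃ i < 9, ζ ^ i = c ^ 56 :=
    hζ.eq_pow_of_pow_eq_one (by rw [← pow_mul, pow_mul c 63 8, hc, one_pow])
  have hcζ (j : ℕ) : (c * ζ ^ j) ^ 63 = 1 := by
    rw [mul_pow, hc, pow_right_comm, pow_mul ζ 9 7, hζ.pow_eq_one, one_pow, one_pow, one_mul]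
  have hcζ' (j : ℕ) : (c * ζ ^ j) ^ 56 = ζ ^ (i + 2 * j) := by
    rw [mul_pow, ← hi, pow_right_comm, pow_eq_pow_mod 56 hζ.pow_eq_one, ← pow_mul, ← pow_add]
  have hterm (j : ℕ) (x : F) : a * (ζ ^ j * x) = c * ζ ^ j * b * x := by rw [← hcb]; ring
  simp_rw [card_filter_deLangeSet hζ, hterm,
    card_filter_pow_ninetyOne_quarticTrace_eq_zero hF hb (hcζ _), hcζ']
  rw [← mul_sum]
  rcases sum_three_card_traceFiber_mem hF hζ (by rw [← pow_mul, hb]) h13 i with h | h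
  · exact Or.inl (by rw [h]; rfl)
  · exact Or.inr (by rw [h]; rfl)

end DeLangeSet

section DeLangeGraph

variable {F : Type*} [Field F] [Fintype F]

theorem trace_eq_zero_iff_quarticTrace_eq_zero {K : Type*} [Field K] [Fintype K] [Algebra K F]
    (hK : Fintype.card K = 2 ^ 3) (hF : Fintype.card F = 2 ^ 12) (z : F) :
    Algebra.trace K F z = 0 ↔ quarticTrace z = 0 := by
  have hfinrank : Module.finrank K F = 4 := by
    have h := Module.card_eq_pow_finrank (K := K) (V := F)
    rw [hF, hK, ← pow_mul] at h
    have := Nat.pow_right_injective le_rfl h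
    omega
  rw [← (algebraMap K F).injective.eq_iff, map_zero, FiniteField.algebraMap_trace_eq_sum_pow,
    hfinrank, Nat.card_eq_fintype_card, hK]
  simp [sum_range_succ, quarticTrace]

variable [CharP F 2] {ζ : F}

theorem exists_algebra_galoisField_of_card_eq (hF : Fintype.card F = 2 ^ 12) :
    Nonempty (Algebra (GaloisField 2 3) F) := by
  let : Algebra (ZMod 2) F := ZMod.algebra F 2
  have hfinrank : Module.finrank (ZMod 2) F = 12 := by
    have h := Module.card_eq_pow_finrank (K := ZMod 2) (V := F)
    rw [hF, ZMod.card] at h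
    exact (Nat.pow_right_injective le_rfl h).symm
  obtain ⟨f⟩ : Nonempty (GaloisField 2 3 →ₐ[ZMod 2] F) :=
    FiniteField.nonempty_algHom_of_finrank_dvd (by
      rw [GaloisField.finrank 2 (by norm_num), hfinrank]
      norm_num)
  exact ⟨f.toRingHom.toAlgebra⟩

theorem sum_addChar_deLangeSet (hF : Fintype.card F = 2 ^ 12) (hζ : IsPrimitiveRoot ζ 9)
    {ψ : AddChar F ℂ} (hψ : ψ ≠ 1) :
    ∑ x ∈ deLangeSet ζ, ψ x = -15 ∨ ∑ x ∈ deLangeSet ζ, ψ x = 17 := by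
  obtain ⟨_⟩ := exists_algebra_galoisField_of_card_eq hF
  let : Fintype (GaloisField 2 3) := Fintype.ofFinite _
  have hK : Fintype.card (GaloisField 2 3) = 2 ^ 3 := by
    rw [← Nat.card_eq_fintype_card, GaloisField.card 2 3 (by norm_num)]
  have hsmul (s : GaloisField 2 3) (hs : s ≠ 0) (x : F) (hx : x ∈ deLangeSet ζ) :
      s • x ∈ deLangeSet ζ := by
    have hs7 : s ^ 7 = 1 := by
      have h := FiniteField.pow_card_sub_one_eq_one s hs
      rwa [hK] at h
    rw [Algebra.smul_def]
    exact mul_mem_deLangeSet (by rw [← map_pow, hs7, map_one]) hx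
  obtain ⟨a, ha, hsum⟩ := exists_card_filter_trace_eq_of_smul_mem hsmul hψ
  simp_rw [trace_eq_zero_iff_quarticTrace_eq_zero hK hF] at hsum
  rw [card_deLangeSet hF hζ, hK] at hsum
  rcases card_filter_deLangeSet_quarticTrace_mem hF hζ ha with h | h <;> rw [h] at hsum <;>
    push_cast at hsum
  · left
    linear_combination hsum / 7
  · right
    linear_combination hsum / 7

theorem isSRGWith_cayley_deLangeSet (hF : Fintype.card F = 2 ^ 12) (hζ : IsPrimitiveRoot ζ 9) :
    (cayley (deLangeSet ζ : Set F)).IsSRGWith (Fintype.card F) 273 20 18 := by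
  rw [← card_deLangeSet hF hζ]
  refine isSRGWith_cayley_of_addChar_sum (zero_notMem_deLangeSet hζ) ?_ (α := -15) (β := 17)
    (fun χ hχ => ?_) ?_ ?_
  · simp [CharTwo.neg_eq]
  · simpa using sum_addChar_deLangeSet hF hζ hχ
  · norm_num
  · rw [hF, card_deLangeSet hF hζ]
    norm_num

end DeLangeGraph

/-- De Lange's example: `q = 2¹²`, `N = 45`, `D = C₀ ∪ C₅ ∪ C₁₀` gives a
strongly regular Cayley graph. -/
theorem statement_18 (F : Type*) [Field F] [Fintype F] (hcard : Fintype.card F = 2 ^ 12)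
    (γ : Fˣ) (hγ : ∀ x : Fˣ, x ∈ Subgroup.zpowers γ)
    (D : Set F) (hD : D = cycClass γ 45 0 ∪ cycClass γ 45 5 ∪ cycClass γ 45 10) :
    ∃ k lam mu : ℕ, (cayley D).IsSRGWith (Fintype.card F) k lam mu := by
  have hunits := card_units_eq_of_card_eq hcard
  have : CharP F 2 := charP_of_card_eq_prime_pow hcard
  have hζ : IsPrimitiveRoot ((γ : F) ^ 455) 9 := by
    have horder : orderOf γ = 455 * 9 := by
      rw [orderOf_eq_card_of_forall_mem_zpowers hγ, Nat.card_eq_fintype_card, hunits]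
    exact (IsPrimitiveRoot.coe_units_iff.mpr (IsPrimitiveRoot.orderOf γ)).pow (orderOf_pos γ)
      horder
  have hDζ : D = deLangeSet ((γ : F) ^ 455) := by
    ext x
    simp only [hD, Set.mem_union, mem_cycClass_iff_pow_eq hγ (show 45 * 91 = _ from hunits.symm),
      mem_coe, mem_deLangeSet, mem_range, Nat.exists_lt_succ_right, ← pow_mul]
    simp
  exact ⟨273, 20, 18, hDζ ▸ isSRGWith_cayley_deLangeSet hcard hζ⟩
end
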